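/- arXiv:2206.03323 — 2 statements merged into one kernel-verified Lean document; each statement's English description precedes it below -/
import Mathlib

section
/- Let V = {S_1, ..., S_n} be a simple m-dimensional n-Venn diagram. If V is fully reducible, then n ≤ m + 1. -/
open Set Metric Bornology

section VennDefs

variable {E : Type*} [TopologicalSpace E]

/-- `A ⊆ E` is homeomorphic to the `d`-dimensional sphere `S^d ⊆ ℝ^{d+1}`. -/
def HomeoToSphere (d : ℕ) (A : Set E) : Prop :=
  Nonempty (A ≃ₜ (Metric.sphere (0 : EuclideanSpace ℝ (Fin (d + 1))) 1 :
    Set (EuclideanSpace ℝ (Fin (d + 1)))))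

/-- `A` is a union of finitely many compact sets, each homeomorphic to `S^d`. -/
def FinUnionOfSpheres (d : ℕ) (A : Set E) : Prop :=
  ∃ 𝒞 : Finset (Set E), A = ⋃₀ ↑𝒞 ∧ ∀ C ∈ 𝒞, IsCompact C ∧ HomeoToSphere d C

/-- `A` is a disjoint union of finitely many compact sets, each homeomorphic to `S^d`. -/
def FinDisjUnionOfSpheres (d : ℕ) (A : Set E) : Prop :=
  ∃ 𝒞 : Finset (Set E), A = ⋃₀ ↑𝒞 ∧ (↑𝒞 : Set (Set E)).PairwiseDisjoint id ∧
    ∀ C ∈ 𝒞, IsCompact C ∧ HomeoToSphere d C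

end VennDefs

section MetricVennDefs

variable {E : Type*} [MetricSpace E]

/-- An `m`-surface: a compact set homeomorphic to the sphere `S^{m-1}`. -/
def IsMSurface (m : ℕ) (S : Set E) : Prop :=
  IsCompact S ∧ HomeoToSphere (m - 1) S

/-- The two sides of an `m`-surface: side `0` (the "interior") consists of the points of the
complement whose connected component in the complement is bounded, and side `1`
(the "exterior") of those whose component is unbounded. -/
def surfSide (S : Set E) : Fin 2 → Set E := fun ε =>
  if ε = 0 then {x | x ∉ S ∧ IsBounded (connectedComponentIn Sᶜ x)}
  else {x | x ∉ S ∧ ¬ IsBounded (connectedComponentIn Sᶜ x)}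

/-- A family of `m`-surfaces is an `m`-dimensional Venn diagram if every region
`S₁^{ε₁} ∩ ⋯ ∩ Sₙ^{εₙ}` is nonempty and connected, and the intersection of any two of the
surfaces is a disjoint union of finitely many `(m-1)`-surfaces, i.e. sets homeomorphic
to `S^{m-2}`. -/
def IsVennDiagram (m : ℕ) {ι : Type*} [Fintype ι] (S : ι → Set E) : Prop :=
  (∀ i, IsMSurface m (S i)) ∧
  (∀ ε : ι → Fin 2, (⋂ i, surfSide (S i) (ε i)).Nonempty ∧
    IsConnected (⋂ i, surfSide (S i) (ε i))) ∧
  (∀ i j, i ≠ j → FinDisjUnionOfSpheres (m - 2) (S i ∩ S j))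

/-- A Venn diagram is simple if for every `k ≥ 2`, the intersection of any `k` distinct
surfaces is a union of finitely many sets homeomorphic to `S^{m-k}` (and is empty
when `m - k ≤ 0`). -/
def IsSimpleVennDiagram (m : ℕ) {ι : Type*} [Fintype ι] (S : ι → Set E) : Prop :=
  IsVennDiagram m S ∧
  ∀ t : Finset ι, 2 ≤ t.card →
    if m ≤ t.card then (⋂ i ∈ t, S i) = ∅
    else FinUnionOfSpheres (m - t.card) (⋂ i ∈ t, S i)

/-- A Venn diagram is fully reducible if every subfamily is again a Venn diagram. -/
def FullyReducible (m : ℕ) {ι : Type*} [Fintype ι] (S : ι → Set E) : Prop :=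
  ∀ t : Finset ι, IsVennDiagram m (fun i : {x // x ∈ t} => S i.1)

/-- The number of regions of a family of surfaces: the number of connected components of
the nonempty cells `⋂ i, (S i)^{ε i}`. -/
noncomputable def vennRegionCount {ι : Type*} [Fintype ι] (S : ι → Set E) : ℕ :=
  Nat.card {A : Set E // ∃ (ε : ι → Fin 2) (x : E),
    x ∈ ⋂ i, surfSide (S i) (ε i) ∧ A = connectedComponentIn (⋂ i, surfSide (S i) (ε i)) x}

/-- The edges of the diagram lying on the surface `S i`: connected components of
`S i \ ⋃_{j ≠ i} S j`. -/
def vennEdgeSet {ι : Type*} [Fintype ι] (S : ι → Set E) (i : ι) : Set (Set E) :=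
  {A | ∃ x ∈ S i \ ⋃ j ∈ {j | j ≠ i}, S j,
    A = connectedComponentIn (S i \ ⋃ j ∈ {j | j ≠ i}, S j) x}

/-- The number of edges lying on the surface `S i`. -/
noncomputable def vennEdgeCountOn {ι : Type*} [Fintype ι] (S : ι → Set E) (i : ι) : ℕ :=
  Nat.card (vennEdgeSet S i)

/-- The total number of edges of the diagram. -/
noncomputable def vennEdgeCount {ι : Type*} [Fintype ι] (S : ι → Set E) : ℕ :=
  ∑ i, vennEdgeCountOn S i

end MetricVennDefs

/-!
Homology is computed with rational chains of affine simplices in open sets, reduced and indexed so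
that degree `1` counts the components minus one. The complement of a compact `K ⊆ E` is replaced by
the complement in `E × ℝ` of the closed cone over `K × {1}`. This set is homotopy equivalent to the
complement of `K` in the one-point compactification of `E`, but Mayer–Vietoris applies to it with
no special care for the point at infinity, even when `K` is empty.

The complement of a compact sphere of codimension `k` then has a single nonzero Betti number, a `1`
in degree `k`; this is a case of Alexander duality. Iterating Mayer–Vietoris over surfaces `Sᵢ`, `i
∈ t`, bounds the first Betti number of the complement of their union by `∑_s β_{|s|}(⋂_{i ∈ s} Sᵢ)`,
the sum running over the nonempty `s ⊆ t`, with equality when the neighbouring Betti numbers vanish.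
Since there are `2 ^ |t|` regions, the left-hand side is `2 ^ |t| - 1`, so by induction on `|t|`
every term is `1`: the intersection of any `k` surfaces is a single sphere of codimension `k`. For
`k = m + 1` this is the empty set, seen as `S^{-1}`, whose complement has a Betti number `1` in
degree `m + 1` alone. The intersection of `m + 2` surfaces would again be empty, but would need a
Betti number `1` in degree `m + 2`.
-/

/-- Rational combinations of affine simplices, a simplex being given by the list of its vertices. -/
abbrev AffineChain (V : Type*) := List V →₀ ℚ

namespace AffineChain

section Boundary

variable {V : Type*}

/-- The join of a chain with the vertex `v`. -/
noncomputable def cone (v : V) : AffineChain V →ₗ[ℚ] AffineChain V :=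
  Finsupp.lmapDomain ℚ ℚ (List.cons v)

/-- The simplicial boundary, which maps a vertex to the empty simplex. -/
noncomputable def boundary : AffineChain V →ₗ[ℚ] AffineChain V :=
  Finsupp.linearCombination ℚ fun l ↦
    ∑ i : Fin l.length, (-1 : ℚ) ^ (i : ℕ) • Finsupp.single (l.eraseIdx i) 1

@[simp]
lemma cone_single (v : V) (l : List V) (r : ℚ) :
    cone v (Finsupp.single l r) = Finsupp.single (v :: l) r := by
  simp [cone]

lemma boundary_single (l : List V) :
    boundary (Finsupp.single l 1) =
      ∑ i : Fin l.length, (-1 : ℚ) ^ (i : ℕ) • Finsupp.single (l.eraseIdx i) 1 := by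
  simp [boundary]

@[simp]
lemma boundary_single_nil : boundary (Finsupp.single ([] : List V) 1) = 0 := by
  simp [boundary_single]

lemma boundary_single_cons (v : V) (l : List V) :
    boundary (Finsupp.single (v :: l) 1) =
      Finsupp.single l 1 - cone v (boundary (Finsupp.single l 1)) := by
  rw [boundary_single, boundary_single, map_sum, sub_eq_add_neg, ← Finset.sum_neg_distrib]
  refine (Fin.sum_univ_succ _).trans ?_
  simp [pow_succ]

lemma boundary_single_singleton (x : V) :
    boundary (Finsupp.single [x] 1) = Finsupp.single [] 1 := by
  simp [boundary_single_cons]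

lemma boundary_single_pair (x y : V) :
    boundary (Finsupp.single [x, y] 1) = Finsupp.single [y] 1 - Finsupp.single [x] 1 := by
  simp [boundary_single_cons]

lemma boundary_comp_cone (v : V) : boundary ∘ₗ cone v = LinearMap.id - cone v ∘ₗ boundary := by
  refine Finsupp.lhom_ext' fun l ↦ LinearMap.ext_ring ?_
  simp [boundary_single_cons]

lemma boundary_cone (v : V) (c : AffineChain V) :
    boundary (cone v c) = c - cone v (boundary c) :=
  LinearMap.congr_fun (boundary_comp_cone v) c

lemma boundary_comp_boundary : boundary ∘ₗ boundary (V := V) = 0 := by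
  refine Finsupp.lhom_ext' fun l ↦ LinearMap.ext_ring ?_
  change boundary (boundary (Finsupp.single l 1)) = 0
  induction l with
  | nil => simp
  | cons v l ih => simp [boundary_single_cons, boundary_cone, ih]

@[simp]
lemma boundary_boundary (c : AffineChain V) : boundary (boundary c) = 0 :=
  LinearMap.congr_fun boundary_comp_boundary c

lemma map_mem_of_mem_supported {M : Type*} [AddCommGroup M] [Module ℚ M] {P : Set (List V)}
    {f : AffineChain V →ₗ[ℚ] M} {N : Submodule ℚ M} (h : ∀ l ∈ P, f (Finsupp.single l 1) ∈ N)
    {c : AffineChain V} (hc : c ∈ Finsupp.supported ℚ ℚ P) : f c ∈ N := by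
  rw [Finsupp.supported_eq_span_single] at hc
  refine (Submodule.span_le (p := N.comap f)).2 ?_ hc
  rintro _ ⟨l, hl, rfl⟩
  exact h l hl

lemma single_mem_supported {P : Set (List V)} {l : List V} (hl : l ∈ P) :
    Finsupp.single l 1 ∈ Finsupp.supported ℚ ℚ P :=
  Finsupp.single_mem_supported ℚ 1 hl

lemma cone_mem_supported {P Q : Set (List V)} {v : V} (h : ∀ l ∈ P, v :: l ∈ Q)
    {c : AffineChain V} (hc : c ∈ Finsupp.supported ℚ ℚ P) :
    cone v c ∈ Finsupp.supported ℚ ℚ Q :=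
  map_mem_of_mem_supported
    (fun l hl ↦ by simpa only [cone_single] using single_mem_supported (h l hl)) hc

end Boundary

section Simplex

variable {V : Type*} [NormedAddCommGroup V] [NormedSpace ℝ V] {n : ℕ} {U U' : Set V}
  {l l' : List V} {v x : V}

/-- The affine simplex spanned by the points of a list. -/
def simplex (l : List V) : Set V := convexHull ℝ {x | x ∈ l}

lemma mem_simplex (h : x ∈ l) : x ∈ simplex l := subset_convexHull ℝ _ h

lemma simplex_singleton (x : V) : simplex [x] = {x} := by
  simp [simplex]

lemma simplex_subset_iff (hU : Convex ℝ U) : simplex l ⊆ U ↔ ∀ x ∈ l, x ∈ U :=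
  hU.convexHull_subset_iff

lemma simplex_mono (h : l' ⊆ l) : simplex l' ⊆ simplex l :=
  convexHull_mono h

lemma isCompact_simplex (l : List V) : IsCompact (simplex l) :=
  (List.finite_toSet l).isCompact_convexHull ℝ

/-- Chains on `U`: the combinations of affine simplices with `n` vertices which lie in `U`. So the
degree is shifted by one, and in degree `0` there is the empty simplex, as in the augmented chain
complex. -/
noncomputable def chains (n : ℕ) (U : Set V) : Submodule ℚ (AffineChain V) :=
  Finsupp.supported ℚ ℚ {l : List V | l.length = n ∧ simplex l ⊆ U}

lemma single_mem_chains (hn : l.length = n) (hl : simplex l ⊆ U) :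
    Finsupp.single l 1 ∈ chains n U :=
  single_mem_supported ⟨hn, hl⟩

lemma chains_mono (h : U ⊆ U') : chains n U ≤ chains n U' :=
  Finsupp.supported_mono fun _ hl ↦ ⟨hl.1, hl.2.trans h⟩

lemma chains_inter : chains n (U ∩ U') = chains n U ⊓ chains n U' := by
  rw [chains, chains, chains, ← Finsupp.supported_inter]
  congr 1
  ext l
  simp only [mem_ofPred_eq, subset_inter_iff, mem_inter_iff]
  tauto

lemma boundary_single_mem_chains (hn : l.length = n + 1) (hl : simplex l ⊆ U) :
    boundary (Finsupp.single l 1) ∈ chains n U := by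
  rw [boundary_single]
  refine Submodule.sum_mem _ fun i _ ↦ Submodule.smul_mem _ _ (single_mem_chains ?_ ?_)
  · simp [List.length_eraseIdx_of_lt i.2, hn]
  · exact (simplex_mono List.eraseIdx_subset).trans hl

lemma boundary_mem_chains {c : AffineChain V} (hc : c ∈ chains (n + 1) U) :
    boundary c ∈ chains n U :=
  map_mem_of_mem_supported (fun _ hl ↦ boundary_single_mem_chains hl.1 hl.2) hc

lemma boundary_eq_zero_of_mem_chains_zero {c : AffineChain V} (hc : c ∈ chains 0 U) :
    boundary c = 0 := by
  have h : boundary c ∈ (⊥ : Submodule ℚ (AffineChain V)) := by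
    refine map_mem_of_mem_supported (fun l hl ↦ ?_) hc
    simp [List.length_eq_zero_iff.1 hl.1]
  simpa using h

end Simplex

section Subdivision

variable {V : Type*} [NormedAddCommGroup V] [NormedSpace ℝ V] {n : ℕ} {U U₁ U₂ : Set V}
  {l : List V} {x y : V} {d : ℝ}

/-- The barycenter of the simplex spanned by a list. -/
noncomputable def barycenter (l : List V) : V :=
  Finset.univ.centerMass (fun _ : Fin l.length ↦ (1 : ℝ)) l.get

lemma barycenter_mem_simplex (hl : l ≠ []) : barycenter l ∈ simplex l :=
  Finset.centerMass_mem_convexHull _ (fun _ _ ↦ zero_le_one)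
    (by simpa using List.length_pos_iff.2 hl) fun i _ ↦ l.get_mem i

lemma barycenter_sub (hl : l ≠ []) (x : V) :
    barycenter l - x = (l.length : ℝ)⁻¹ • ∑ i, (l.get i - x) := by
  have hpos : (l.length : ℝ) ≠ 0 := by simpa using hl
  simp [barycenter, Finset.centerMass, Finset.sum_sub_distrib, smul_sub, ← Nat.cast_smul_eq_nsmul ℝ,
    smul_smul, hpos]

lemma dist_barycenter_le (hn : l.length ≤ n + 1) (hd : ∀ y ∈ l, ∀ z ∈ l, dist y z ≤ d)
    (hx : x ∈ l) : dist x (barycenter l) ≤ n / (n + 1) * d := by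
  have hl : l ≠ [] := List.ne_nil_of_mem hx
  have hpos : 0 < (l.length : ℝ) := by simpa using List.length_pos_iff.2 hl
  have hn' : (l.length : ℝ) ≤ n + 1 := mod_cast hn
  have hd₀ : 0 ≤ d := dist_nonneg.trans (hd x hx x hx)
  obtain ⟨j, rfl⟩ := List.get_of_mem hx
  have hsum : ‖∑ i, (l.get i - l.get j)‖ ≤ (l.length - 1 : ℝ) * d := by
    rw [← Finset.sum_erase (a := j) _ (sub_self (l.get j))]
    refine (norm_sum_le_of_le (f := fun i ↦ l.get i - l.get j) (n := fun _ ↦ d) _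
      fun i _ ↦ ?_).trans_eq ?_
    · rw [← dist_eq_norm]
      exact hd _ (l.get_mem i) _ hx
    · simp [Finset.card_erase_of_mem, Nat.cast_sub (Nat.one_le_of_lt j.pos)]
  calc dist (l.get j) (barycenter l) = (l.length : ℝ)⁻¹ * ‖∑ i, (l.get i - l.get j)‖ := by
        rw [dist_comm, dist_eq_norm, barycenter_sub hl, norm_smul, norm_inv,
          Real.norm_of_nonneg hpos.le]
    _ ≤ (l.length : ℝ)⁻¹ * ((l.length - 1) * d) := by gcongr
    _ = (1 - (l.length : ℝ)⁻¹) * d := by field_simp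
    _ ≤ (1 - ((n : ℝ) + 1)⁻¹) * d := by gcongr
    _ = n / (n + 1) * d := by field_simp; ring

lemma dist_barycenter_le_of_mem_simplex (hn : l.length ≤ n + 1)
    (hd : ∀ y ∈ l, ∀ z ∈ l, dist y z ≤ d) (hx : x ∈ simplex l) :
    dist x (barycenter l) ≤ n / (n + 1) * d :=
  (simplex_subset_iff (convex_closedBall _ _)).2 (fun _ hy ↦ dist_barycenter_le hn hd hy) hx

/-- The chain homotopy from the identity to barycentric subdivision, on simplices: the cone from
the barycenter over the simplex minus the homotopy of its boundary. -/
noncomputable def subdivisionHomotopyList : List V → AffineChain V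
  | [] => 0
  | v :: l => cone (barycenter (v :: l)) (Finsupp.single (v :: l) 1 -
      ∑ i : Fin (v :: l).length, (-1 : ℚ) ^ (i : ℕ) • subdivisionHomotopyList ((v :: l).eraseIdx i))
  termination_by l => l.length
  decreasing_by simp [List.length_eraseIdx_of_lt i.2]

/-- The chain homotopy from the identity to barycentric subdivision. -/
noncomputable def subdivisionHomotopy : AffineChain V →ₗ[ℚ] AffineChain V :=
  Finsupp.linearCombination ℚ subdivisionHomotopyList

/-- Barycentric subdivision, given as the other end of its chain homotopy to the identity. -/
noncomputable def subdivision : AffineChain V →ₗ[ℚ] AffineChain V :=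
  LinearMap.id - (boundary ∘ₗ subdivisionHomotopy + subdivisionHomotopy ∘ₗ boundary)

lemma subdivision_apply (c : AffineChain V) : subdivision c =
    c - (boundary (subdivisionHomotopy c) + subdivisionHomotopy (boundary c)) :=
  rfl

lemma subdivisionHomotopy_single_nil :
    subdivisionHomotopy (Finsupp.single ([] : List V) 1) = 0 := by
  simp [subdivisionHomotopy, subdivisionHomotopyList]

lemma subdivisionHomotopy_single (hl : l ≠ []) :
    subdivisionHomotopy (Finsupp.single l 1) = cone (barycenter l)
      (Finsupp.single l 1 - subdivisionHomotopy (boundary (Finsupp.single l 1))) := by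
  obtain ⟨v, l, rfl⟩ := List.exists_cons_of_ne_nil hl
  simp [subdivisionHomotopy, boundary_single, subdivisionHomotopyList]

lemma subdivision_single_nil :
    subdivision (Finsupp.single ([] : List V) 1) = Finsupp.single [] 1 := by
  simp [subdivision, subdivisionHomotopy_single_nil]

lemma subdivision_single (hl : l ≠ []) :
    subdivision (Finsupp.single l 1) =
      cone (barycenter l) (subdivision (boundary (Finsupp.single l 1))) := by
  simp only [subdivision_apply, subdivisionHomotopy_single hl, boundary_cone, map_sub,
    boundary_boundary, map_zero, map_add]
  abel

lemma subdivisionHomotopy_single_mem (l : List V) :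
    subdivisionHomotopy (Finsupp.single l 1) ∈ chains (l.length + 1) (simplex l) := by
  induction hn : l.length generalizing l with
  | zero => simp [List.length_eq_zero_iff.1 hn, subdivisionHomotopy_single_nil]
  | succ n ih =>
    have hl : l ≠ [] := by rintro rfl; simp at hn
    rw [subdivisionHomotopy_single hl]
    refine cone_mem_supported (P := {l' | l'.length = n + 1 ∧ simplex l' ⊆ simplex l}) ?_
      (Submodule.sub_mem _ (single_mem_chains hn subset_rfl) ?_)
    · rintro l' ⟨hn', hl'⟩
      refine ⟨by simp [hn'], (simplex_subset_iff (convex_convexHull ℝ _)).2 ?_⟩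
      exact List.forall_mem_cons.2 ⟨barycenter_mem_simplex hl, fun x hx ↦ hl' (mem_simplex hx)⟩
    · rw [boundary_single, map_sum]
      refine Submodule.sum_mem _ fun i _ ↦ ?_
      rw [map_smul]
      exact Submodule.smul_mem _ _ (chains_mono (simplex_mono List.eraseIdx_subset)
        (ih _ (by simp [List.length_eraseIdx_of_lt i.2, hn])))

lemma subdivisionHomotopy_mem_chains {c : AffineChain V} (hc : c ∈ chains n U) :
    subdivisionHomotopy c ∈ chains (n + 1) U :=
  map_mem_of_mem_supported
    (fun l hl ↦ hl.1 ▸ chains_mono hl.2 (subdivisionHomotopy_single_mem l)) hc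

lemma boundary_subdivision (c : AffineChain V) :
    boundary (subdivision c) = subdivision (boundary c) := by
  simp [subdivision]

lemma subdivision_mem_chains {c : AffineChain V} (hc : c ∈ chains n U) :
    subdivision c ∈ chains n U := by
  refine Submodule.sub_mem _ hc (Submodule.add_mem _
    (boundary_mem_chains (subdivisionHomotopy_mem_chains hc)) ?_)
  rw [LinearMap.comp_apply]
  cases n with
  | zero => simp [boundary_eq_zero_of_mem_chains_zero hc]
  | succ n => exact subdivisionHomotopy_mem_chains (boundary_mem_chains hc)

lemma boundary_subdivision_pow (k : ℕ) (c : AffineChain V) :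
    boundary ((subdivision ^ k) c) = (subdivision ^ k) (boundary c) := by
  induction k with
  | zero => simp
  | succ k ih => simp [pow_succ', boundary_subdivision, ih]

lemma subdivision_pow_mem_chains {c : AffineChain V} (hc : c ∈ chains n U) (k : ℕ) :
    (subdivision ^ k) c ∈ chains n U := by
  induction k with
  | zero => simpa
  | succ k ih => simpa [pow_succ'] using subdivision_mem_chains ih

/-- Chains of simplices with `n` vertices at mutual distance at most `d`, lying in `U`. -/
noncomputable def fineChains (n : ℕ) (U : Set V) (d : ℝ) : Submodule ℚ (AffineChain V) :=
  Finsupp.supported ℚ ℚ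
    {l | l.length = n ∧ simplex l ⊆ U ∧ ∀ x ∈ l, ∀ y ∈ l, dist x y ≤ d}

lemma subdivision_single_mem_fineChains (hn : l.length ≤ n + 1)
    (hd : ∀ x ∈ l, ∀ y ∈ l, dist x y ≤ d) :
    subdivision (Finsupp.single l 1) ∈ fineChains l.length (simplex l) (n / (n + 1) * d) := by
  induction hk : l.length generalizing l with
  | zero =>
    obtain rfl := List.length_eq_zero_iff.1 hk
    rw [subdivision_single_nil]
    exact single_mem_supported (by simp)
  | succ k ih =>
    have hl : l ≠ [] := by rintro rfl; simp at hk
    rw [subdivision_single hl]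
    refine cone_mem_supported (P := {l' | l'.length = k ∧ simplex l' ⊆ simplex l ∧
      ∀ x ∈ l', ∀ y ∈ l', dist x y ≤ n / (n + 1) * d}) ?_ ?_
    · rintro l' ⟨hk', hl', hd'⟩
      have hb : ∀ x ∈ l', dist x (barycenter l) ≤ n / (n + 1) * d := fun x hx ↦
        dist_barycenter_le_of_mem_simplex hn hd (hl' (mem_simplex hx))
      have hd₀ : 0 ≤ d := by
        obtain ⟨x, hx⟩ := List.exists_mem_of_ne_nil l hl
        exact dist_nonneg.trans (hd x hx x hx)
      refine ⟨by simp [hk'], (simplex_subset_iff (convex_convexHull ℝ _)).2 ?_, ?_⟩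
      · exact List.forall_mem_cons.2 ⟨barycenter_mem_simplex hl, fun x hx ↦ hl' (mem_simplex hx)⟩
      · simp only [List.forall_mem_cons, dist_self]
        exact ⟨⟨by positivity, fun x hx ↦ dist_comm x _ ▸ hb x hx⟩,
          fun x hx ↦ ⟨hb x hx, hd' x hx⟩⟩
    · rw [boundary_single, map_sum]
      refine Submodule.sum_mem _ fun i _ ↦ ?_
      have hsub : l.eraseIdx i ⊆ l := List.eraseIdx_subset
      have hlen : (l.eraseIdx i).length = k := by simp [List.length_eraseIdx_of_lt i.2, hk]
      rw [map_smul]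
      refine Submodule.smul_mem _ _ (Finsupp.supported_mono ?_ (ih (by omega)
        (fun x hx y hy ↦ hd x (hsub hx) y (hsub hy)) hlen))
      exact fun l' h ↦ ⟨h.1, h.2.1.trans (simplex_mono hsub), h.2.2⟩

lemma subdivision_mem_fineChains {c : AffineChain V} (hc : c ∈ fineChains n U d) :
    subdivision c ∈ fineChains n U (n / (n + 1) * d) :=
  map_mem_of_mem_supported (fun _ hl ↦ Finsupp.supported_mono
    (fun _ h ↦ And.intro (h.1.trans hl.1) ⟨h.2.1.trans hl.2.1, h.2.2⟩)
    (subdivision_single_mem_fineChains (hl.1.trans_le n.le_succ) hl.2.2)) hc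

lemma subdivision_pow_mem_fineChains {c : AffineChain V} (hc : c ∈ fineChains n U d) (k : ℕ) :
    (subdivision ^ k) c ∈ fineChains n U ((n / (n + 1)) ^ k * d) := by
  induction k with
  | zero => simpa
  | succ k ih =>
    simpa [pow_succ', mul_assoc] using subdivision_mem_fineChains ih

lemma eventually_subdivision_pow_single_mem_sup (h₁ : IsOpen U₁) (h₂ : IsOpen U₂)
    (hn : l.length = n) (hl : simplex l ⊆ U₁ ∪ U₂) :
    ∀ᶠ k in Filter.atTop,
      (subdivision ^ k) (Finsupp.single l 1) ∈ chains n U₁ ⊔ chains n U₂ := by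
  obtain ⟨δ, hδ, hball⟩ := lebesgue_number_lemma_of_metric (c := fun b ↦ cond b U₁ U₂)
    (isCompact_simplex l) (Bool.forall_bool.2 ⟨h₂, h₁⟩) (by rwa [← union_eq_iUnion])
  have hfine : Finsupp.single l 1 ∈ fineChains n (simplex l) (diam {x | x ∈ l}) :=
    single_mem_supported ⟨hn, subset_rfl, fun x hx y hy ↦
      dist_le_diam_of_mem (List.finite_toSet l).isBounded hx hy⟩
  have hlim : Filter.Tendsto (fun k : ℕ ↦ (n / (n + 1) : ℝ) ^ k * diam {x | x ∈ l})
      Filter.atTop (nhds (0 * diam {x | x ∈ l})) :=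
    (tendsto_pow_atTop_nhds_zero_of_lt_one (by positivity)
      ((div_lt_one (by positivity)).2 (lt_add_one _))).mul_const _
  filter_upwards [hlim.eventually_lt_const (by simpa using hδ)] with k hk
  rw [chains, chains, ← Finsupp.supported_union]
  refine Finsupp.supported_mono ?_ (subdivision_pow_mem_fineChains hfine k)
  rintro (_ | ⟨v, l'⟩) ⟨hn', hl', hd⟩
  · exact .inl ⟨hn', by simp [simplex]⟩
  · have hs : simplex (v :: l') ⊆ ball v δ :=
      (simplex_subset_iff (convex_ball _ _)).2 fun y hy ↦ (hd y hy v (by simp)).trans_lt hk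
    obtain ⟨_ | _, hb⟩ := hball v (hl' (mem_simplex (by simp)))
    exacts [.inr ⟨hn', hs.trans hb⟩, .inl ⟨hn', hs.trans hb⟩]

lemma exists_subdivision_pow_mem_sup (h₁ : IsOpen U₁) (h₂ : IsOpen U₂) {c : AffineChain V}
    (hc : c ∈ chains n (U₁ ∪ U₂)) :
    ∃ k, (subdivision ^ k) c ∈ chains n U₁ ⊔ chains n U₂ := by
  rw [chains, Finsupp.supported_eq_span_single] at hc
  refine Filter.Eventually.exists (f := Filter.atTop) ?_
  induction hc using Submodule.span_induction with
  | mem _ hx =>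
    obtain ⟨l, ⟨hn, hl⟩, rfl⟩ := hx
    exact eventually_subdivision_pow_single_mem_sup h₁ h₂ hn hl
  | zero => simp
  | add x y _ _ hx hy =>
    filter_upwards [hx, hy] with k hx hy
    simpa using Submodule.add_mem _ hx hy
  | smul a x _ hx =>
    filter_upwards [hx] with k hx
    simpa using Submodule.smul_mem _ a hx

end Subdivision

section Homology

variable {V : Type*} [NormedAddCommGroup V] [NormedSpace ℝ V] {n : ℕ} {U U' : Set V}
  {c : AffineChain V}

/-- The `n`-cycles of `U`, `n` being the number of vertices of the simplices. -/
noncomputable def cycles (n : ℕ) (U : Set V) : Submodule ℚ (AffineChain V) :=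
  chains n U ⊓ LinearMap.ker boundary

/-- The `n`-boundaries of `U`, `n` being the number of vertices of the simplices. -/
noncomputable def boundaries (n : ℕ) (U : Set V) : Submodule ℚ (AffineChain V) :=
  (chains (n + 1) U).map boundary

lemma mem_cycles : c ∈ cycles n U ↔ c ∈ chains n U ∧ boundary c = 0 := by
  simp [cycles]

lemma boundary_mem_boundaries (hc : c ∈ chains (n + 1) U) : boundary c ∈ boundaries n U :=
  Submodule.mem_map_of_mem hc

lemma boundary_mem_cycles (hc : c ∈ chains (n + 1) U) : boundary c ∈ cycles n U :=
  mem_cycles.2 ⟨boundary_mem_chains hc, boundary_boundary c⟩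

lemma boundaries_le_cycles : boundaries n U ≤ cycles n U := by
  rintro _ ⟨e, he, rfl⟩
  exact boundary_mem_cycles he

lemma cycles_mono (h : U ⊆ U') : cycles n U ≤ cycles n U' :=
  inf_le_inf_right _ (chains_mono h)

lemma boundaries_mono (h : U ⊆ U') : boundaries n U ≤ boundaries n U' :=
  Submodule.map_mono (chains_mono h)

lemma sub_subdivision_pow_mem_boundaries (hc : c ∈ cycles n U) (k : ℕ) :
    c - (subdivision ^ k) c ∈ boundaries n U := by
  induction k with
  | zero => simp
  | succ k ih =>
    have hk : (subdivision ^ k) c ∈ chains n U :=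
      subdivision_pow_mem_chains (mem_cycles.1 hc).1 k
    have hb : boundary ((subdivision ^ k) c) = 0 := by
      rw [boundary_subdivision_pow, (mem_cycles.1 hc).2, map_zero]
    have hstep : c - (subdivision ^ (k + 1)) c = (c - (subdivision ^ k) c) +
        boundary (subdivisionHomotopy ((subdivision ^ k) c)) := by
      simp only [pow_succ', Module.End.mul_apply, subdivision_apply, hb, map_zero, add_zero]
      abel
    rw [hstep]
    exact Submodule.add_mem _ ih (boundary_mem_boundaries (subdivisionHomotopy_mem_chains hk))

/-- The reduced rational homology of `U`, computed with affine simplices; the degree is one more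
than the usual one. -/
abbrev Homology (n : ℕ) (U : Set V) : Type _ :=
  cycles n U ⧸ (boundaries n U).submoduleOf (cycles n U)

/-- The `n`-th reduced Betti number of `U`; the degree is one more than the usual one. -/
noncomputable def betti (n : ℕ) (U : Set V) : ℕ∞ :=
  Module.length ℚ (Homology n U)

/-- The homology class of a cycle. -/
noncomputable def homologyClass (n : ℕ) (U : Set V) : cycles n U →ₗ[ℚ] Homology n U :=
  Submodule.mkQ _

lemma homologyClass_surjective (n : ℕ) (U : Set V) : Function.Surjective (homologyClass n U) :=
  Submodule.mkQ_surjective _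

lemma homologyClass_eq_zero_iff {z : cycles n U} :
    homologyClass n U z = 0 ↔ (z : AffineChain V) ∈ boundaries n U :=
  Submodule.Quotient.mk_eq_zero _

lemma betti_eq_zero_iff : betti n U = 0 ↔ cycles n U ≤ boundaries n U := by
  rw [betti, Module.length_eq_zero_iff, Submodule.Quotient.subsingleton_iff,
    Submodule.submoduleOf, Submodule.comap_subtype_eq_top]

/-- The map induced in homology by an inclusion. -/
noncomputable def homologyMap (n : ℕ) (h : U ⊆ U') : Homology n U →ₗ[ℚ] Homology n U' :=
  Submodule.mapQ _ _ (Submodule.inclusion (cycles_mono h)) fun _ hz ↦ boundaries_mono h hz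

lemma homologyMap_homologyClass_eq_zero_iff (h : U ⊆ U') {z : cycles n U} :
    homologyMap n h (homologyClass n U z) = 0 ↔ (z : AffineChain V) ∈ boundaries n U' :=
  homologyClass_eq_zero_iff (z := Submodule.inclusion (cycles_mono h) z)

end Homology

section MayerVietoris

variable {V : Type*} [NormedAddCommGroup V] [NormedSpace ℝ V] {n : ℕ} {U₁ U₂ : Set V}
  {a b c : AffineChain V}

lemma exists_cycle_inter_of_sub_mem_boundaries (h₁ : IsOpen U₁) (h₂ : IsOpen U₂)
    (ha : a ∈ chains n U₁) (hb : b ∈ chains n U₂) (hab : a - b ∈ boundaries n (U₁ ∪ U₂)) :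
    ∃ k, ∃ c ∈ chains n (U₁ ∩ U₂), c - (subdivision ^ k) a ∈ boundaries n U₁ ∧
      c - (subdivision ^ k) b ∈ boundaries n U₂ := by
  obtain ⟨e, he, hab⟩ := hab
  obtain ⟨k, hk⟩ := exists_subdivision_pow_mem_sup h₁ h₂ he
  obtain ⟨e₁, he₁, e₂, he₂, he⟩ := Submodule.mem_sup.1 hk
  have hsub : (subdivision ^ k) a - boundary e₁ = (subdivision ^ k) b + boundary e₂ := by
    rw [sub_eq_iff_eq_add, add_assoc, ← map_add, add_comm e₂, he, boundary_subdivision_pow, hab,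
      map_sub, add_sub_cancel]
  refine ⟨k, (subdivision ^ k) a - boundary e₁, ?_, ?_, ?_⟩
  · rw [chains_inter]
    refine ⟨Submodule.sub_mem _ (subdivision_pow_mem_chains ha k) (boundary_mem_chains he₁), ?_⟩
    rw [hsub]
    exact Submodule.add_mem _ (subdivision_pow_mem_chains hb k) (boundary_mem_chains he₂)
  · rw [sub_sub_cancel_left]
    exact Submodule.neg_mem _ (boundary_mem_boundaries he₁)
  · rw [hsub, add_sub_cancel_left]
    exact boundary_mem_boundaries he₂

/-- The map `H(U₁ ∩ U₂) → H(U₁) × H(U₂)` of the Mayer–Vietoris sequence. -/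
noncomputable def mayerVietorisMap (n : ℕ) (U₁ U₂ : Set V) :
    Homology n (U₁ ∩ U₂) →ₗ[ℚ] Homology n U₁ × Homology n U₂ :=
  (homologyMap n inter_subset_left).prod (homologyMap n inter_subset_right)

lemma homologyClass_mem_ker_mayerVietorisMap {z : cycles n (U₁ ∩ U₂)} :
    homologyClass n _ z ∈ LinearMap.ker (mayerVietorisMap n U₁ U₂) ↔
      (z : AffineChain V) ∈ boundaries n U₁ ∧ (z : AffineChain V) ∈ boundaries n U₂ := by
  rw [LinearMap.mem_ker, mayerVietorisMap, LinearMap.prod_apply, Function.prod_apply,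
    Prod.mk_eq_zero, homologyMap_homologyClass_eq_zero_iff, homologyMap_homologyClass_eq_zero_iff]

lemma mayerVietorisMap_surjective (h₁ : IsOpen U₁) (h₂ : IsOpen U₂)
    (h : betti n (U₁ ∪ U₂) = 0) : Function.Surjective (mayerVietorisMap n U₁ U₂) := by
  rintro ⟨x, y⟩
  obtain ⟨a, rfl⟩ := homologyClass_surjective _ _ x
  obtain ⟨b, rfl⟩ := homologyClass_surjective _ _ y
  have hab : (a - b : AffineChain V) ∈ boundaries n (U₁ ∪ U₂) := betti_eq_zero_iff.1 h <|
    Submodule.sub_mem _ (cycles_mono subset_union_left a.2) (cycles_mono subset_union_right b.2)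
  obtain ⟨k, c, hc, hca, hcb⟩ := exists_cycle_inter_of_sub_mem_boundaries h₁ h₂
    (mem_cycles.1 a.2).1 (mem_cycles.1 b.2).1 hab
  have hca' : c - a ∈ boundaries n U₁ := by
    simpa using Submodule.sub_mem _ hca (sub_subdivision_pow_mem_boundaries a.2 k)
  have hcb' : c - b ∈ boundaries n U₂ := by
    simpa using Submodule.sub_mem _ hcb (sub_subdivision_pow_mem_boundaries b.2 k)
  have hc₀ : boundary c = 0 := by
    simpa [(mem_cycles.1 a.2).2] using (mem_cycles.1 (boundaries_le_cycles hca')).2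
  refine ⟨homologyClass n _ ⟨c, mem_cycles.2 ⟨hc, hc₀⟩⟩, Prod.ext ?_ ?_⟩
  · exact (Submodule.Quotient.eq _).2 hca'
  · exact (Submodule.Quotient.eq _).2 hcb'

/-- The pairs of `n + 1`-chains of `U₁` and of `U₂` with the same boundary. Through the difference
of its members a pair represents a class of `U₁ ∪ U₂`, whose image under the connecting map of the
Mayer–Vietoris sequence is represented by the common boundary. -/
noncomputable def gluingPairs (n : ℕ) (U₁ U₂ : Set V) :
    Submodule ℚ (AffineChain V × AffineChain V) :=
  (chains (n + 1) U₁).prod (chains (n + 1) U₂) ⊓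
    LinearMap.eqLocus (boundary ∘ₗ LinearMap.fst ℚ _ _) (boundary ∘ₗ LinearMap.snd ℚ _ _)

lemma mem_gluingPairs {p : AffineChain V × AffineChain V} : p ∈ gluingPairs n U₁ U₂ ↔
    (p.1 ∈ chains (n + 1) U₁ ∧ p.2 ∈ chains (n + 1) U₂) ∧ boundary p.1 = boundary p.2 :=
  Iff.rfl

lemma sub_mem_cycles_of_mem_gluingPairs {p : AffineChain V × AffineChain V}
    (hp : p ∈ gluingPairs n U₁ U₂) : p.1 - p.2 ∈ cycles (n + 1) (U₁ ∪ U₂) := by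
  obtain ⟨⟨ha, hb⟩, hab⟩ := mem_gluingPairs.1 hp
  exact mem_cycles.2 ⟨Submodule.sub_mem _ (chains_mono subset_union_left ha)
    (chains_mono subset_union_right hb), by rw [map_sub, hab, sub_self]⟩

lemma boundary_mem_cycles_of_mem_gluingPairs {p : AffineChain V × AffineChain V}
    (hp : p ∈ gluingPairs n U₁ U₂) : boundary p.1 ∈ cycles n (U₁ ∩ U₂) := by
  obtain ⟨⟨ha, hb⟩, hab⟩ := mem_gluingPairs.1 hp
  refine mem_cycles.2 ⟨?_, boundary_boundary _⟩
  rw [chains_inter]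
  exact ⟨boundary_mem_chains ha, hab ▸ boundary_mem_chains hb⟩

/-- The class in `U₁ ∪ U₂` of the difference of a gluing pair. -/
noncomputable def gluingDifference (n : ℕ) (U₁ U₂ : Set V) :
    gluingPairs n U₁ U₂ →ₗ[ℚ] Homology (n + 1) (U₁ ∪ U₂) :=
  homologyClass _ _ ∘ₗ
    (LinearMap.fst ℚ (AffineChain V) (AffineChain V) - LinearMap.snd ℚ _ _).restrict
      fun _ ↦ sub_mem_cycles_of_mem_gluingPairs

/-- The class in `U₁ ∩ U₂` of the common boundary of a gluing pair. -/
noncomputable def gluingBoundary (n : ℕ) (U₁ U₂ : Set V) :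
    gluingPairs n U₁ U₂ →ₗ[ℚ] Homology n (U₁ ∩ U₂) :=
  homologyClass _ _ ∘ₗ
    (boundary ∘ₗ LinearMap.fst ℚ (AffineChain V) (AffineChain V)).restrict
      fun _ ↦ boundary_mem_cycles_of_mem_gluingPairs

lemma mem_ker_gluingDifference {p : gluingPairs n U₁ U₂} :
    p ∈ LinearMap.ker (gluingDifference n U₁ U₂) ↔
      p.1.1 - p.1.2 ∈ boundaries (n + 1) (U₁ ∪ U₂) :=
  homologyClass_eq_zero_iff (z := ⟨_, sub_mem_cycles_of_mem_gluingPairs p.2⟩)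

lemma mem_ker_gluingBoundary {p : gluingPairs n U₁ U₂} :
    p ∈ LinearMap.ker (gluingBoundary n U₁ U₂) ↔ boundary p.1.1 ∈ boundaries n (U₁ ∩ U₂) :=
  homologyClass_eq_zero_iff (z := ⟨_, boundary_mem_cycles_of_mem_gluingPairs p.2⟩)

lemma gluingDifference_surjective (h₁ : IsOpen U₁) (h₂ : IsOpen U₂) :
    Function.Surjective (gluingDifference n U₁ U₂) := by
  intro x
  obtain ⟨z, rfl⟩ := homologyClass_surjective _ _ x
  obtain ⟨hz, hz₀⟩ := mem_cycles.1 z.2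
  obtain ⟨k, hk⟩ := exists_subdivision_pow_mem_sup h₁ h₂ hz
  obtain ⟨a, ha, b, hb, hab⟩ := Submodule.mem_sup.1 hk
  have hbd : boundary a = boundary (-b) := by
    rw [map_neg, eq_neg_iff_add_eq_zero, ← map_add, hab, boundary_subdivision_pow, hz₀, map_zero]
  refine ⟨⟨(a, -b), ⟨⟨ha, Submodule.neg_mem _ hb⟩, hbd⟩⟩, Eq.symm ?_⟩
  refine sub_eq_zero.1 ((map_sub _ _ _).symm.trans (homologyClass_eq_zero_iff.2 ?_))
  change (z - (a - -b) : AffineChain V) ∈ _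
  rw [sub_neg_eq_add, hab]
  exact sub_subdivision_pow_mem_boundaries z.2 k

lemma range_gluingBoundary :
    LinearMap.range (gluingBoundary n U₁ U₂) = LinearMap.ker (mayerVietorisMap n U₁ U₂) := by
  refine le_antisymm ?_ fun x hx ↦ ?_
  · rintro _ ⟨⟨⟨a, b⟩, hp⟩, rfl⟩
    obtain ⟨⟨ha, hb⟩, hab⟩ := mem_gluingPairs.1 hp
    exact homologyClass_mem_ker_mayerVietorisMap.2
      ⟨boundary_mem_boundaries ha, ⟨b, hb, hab.symm⟩⟩
  · obtain ⟨z, rfl⟩ := homologyClass_surjective _ _ x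
    obtain ⟨⟨a, ha, haz⟩, ⟨b, hb, hbz⟩⟩ := homologyClass_mem_ker_mayerVietorisMap.1 hx
    exact ⟨⟨(a, b), ⟨ha, hb⟩, haz.trans hbz.symm⟩,
      congrArg (homologyClass n (U₁ ∩ U₂)) (Subtype.ext haz)⟩

lemma ker_gluingDifference_le (h₁ : IsOpen U₁) (h₂ : IsOpen U₂) :
    LinearMap.ker (gluingDifference n U₁ U₂) ≤ LinearMap.ker (gluingBoundary n U₁ U₂) := by
  rintro ⟨⟨a, b⟩, hp⟩ hab
  obtain ⟨⟨ha, hb⟩, -⟩ := mem_gluingPairs.1 hp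
  obtain ⟨k, c, hc, hca, -⟩ :=
    exists_cycle_inter_of_sub_mem_boundaries h₁ h₂ ha hb (mem_ker_gluingDifference.1 hab)
  have hca₀ : boundary c = (subdivision ^ k) (boundary a) := by
    rw [← boundary_subdivision_pow, ← sub_eq_zero, ← map_sub]
    exact (mem_cycles.1 (boundaries_le_cycles hca)).2
  rw [mem_ker_gluingBoundary, ← sub_add_cancel (boundary a) (boundary c)]
  refine Submodule.add_mem _ ?_ (boundary_mem_boundaries hc)
  rw [hca₀]
  exact sub_subdivision_pow_mem_boundaries (boundary_mem_cycles_of_mem_gluingPairs hp) k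

lemma ker_gluingBoundary_le (h₁ : betti (n + 1) U₁ = 0) (h₂ : betti (n + 1) U₂ = 0) :
    LinearMap.ker (gluingBoundary n U₁ U₂) ≤ LinearMap.ker (gluingDifference n U₁ U₂) := by
  rintro ⟨⟨a, b⟩, hp⟩ hab
  obtain ⟨⟨ha, hb⟩, hbd⟩ := mem_gluingPairs.1 hp
  obtain ⟨c, hc, hca⟩ := mem_ker_gluingBoundary.1 hab
  have hc' : c ∈ chains (n + 1) U₁ ⊓ chains (n + 1) U₂ := by rwa [← chains_inter]
  have hac : a - c ∈ boundaries (n + 1) U₁ := betti_eq_zero_iff.1 h₁ <| mem_cycles.2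
    ⟨Submodule.sub_mem _ ha hc'.1, by rw [map_sub, hca, sub_self]⟩
  have hbc : b - c ∈ boundaries (n + 1) U₂ := betti_eq_zero_iff.1 h₂ <| mem_cycles.2
    ⟨Submodule.sub_mem _ hb hc'.2, by rw [map_sub, hca, ← hbd, sub_self]⟩
  rw [mem_ker_gluingDifference, ← sub_sub_sub_cancel_right a b c]
  exact Submodule.sub_mem _ (boundaries_mono subset_union_left hac)
    (boundaries_mono subset_union_right hbc)

lemma length_submodule_le {R M : Type*} [Ring R] [AddCommGroup M] [Module R M]
    (N : Submodule R M) : Module.length R N ≤ Module.length R M :=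
  Module.length_le_of_injective N.subtype N.subtype_injective

lemma length_range_le_of_ker_le {R M N P : Type*} [Ring R] [AddCommGroup M] [AddCommGroup N]
    [AddCommGroup P] [Module R M] [Module R N] [Module R P] {f : M →ₗ[R] N} {g : M →ₗ[R] P}
    (h : LinearMap.ker g ≤ LinearMap.ker f) :
    Module.length R (LinearMap.range f) ≤ Module.length R (LinearMap.range g) := by
  rw [← f.quotKerEquivRange.length_eq, ← g.quotKerEquivRange.length_eq]
  exact Module.length_le_of_surjective _ (Submodule.factor_surjective h)

lemma length_ker_mayerVietorisMap_le (h₁ : IsOpen U₁) (h₂ : IsOpen U₂) :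
    Module.length ℚ (LinearMap.ker (mayerVietorisMap n U₁ U₂)) ≤ betti (n + 1) (U₁ ∪ U₂) := by
  rw [← range_gluingBoundary]
  exact (length_range_le_of_ker_le (ker_gluingDifference_le h₁ h₂)).trans
    (length_submodule_le _)

lemma betti_union_le_length_ker_mayerVietorisMap (h₁ : IsOpen U₁) (h₂ : IsOpen U₂)
    (hb₁ : betti (n + 1) U₁ = 0) (hb₂ : betti (n + 1) U₂ = 0) :
    betti (n + 1) (U₁ ∪ U₂) ≤ Module.length ℚ (LinearMap.ker (mayerVietorisMap n U₁ U₂)) := by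
  have hlen := length_range_le_of_ker_le (ker_gluingBoundary_le hb₁ hb₂)
  rw [LinearMap.range_eq_top.2 (gluingDifference_surjective h₁ h₂), range_gluingBoundary,
    Module.length_top] at hlen
  exact hlen

lemma betti_inter_eq_length_add_length :
    betti n (U₁ ∩ U₂) = Module.length ℚ (LinearMap.ker (mayerVietorisMap n U₁ U₂)) +
      Module.length ℚ (LinearMap.range (mayerVietorisMap n U₁ U₂)) :=
  Module.length_eq_add_of_exact _ _ (Submodule.subtype_injective _)
    (LinearMap.surjective_rangeRestrict _) (by
      rw [LinearMap.exact_iff, LinearMap.ker_rangeRestrict, Submodule.range_subtype])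

theorem betti_inter_le (h₁ : IsOpen U₁) (h₂ : IsOpen U₂) :
    betti n (U₁ ∩ U₂) ≤ betti n U₁ + betti n U₂ + betti (n + 1) (U₁ ∪ U₂) := by
  have hrange : Module.length ℚ (LinearMap.range (mayerVietorisMap n U₁ U₂)) ≤
      betti n U₁ + betti n U₂ :=
    (length_submodule_le _).trans_eq (Module.length_prod ℚ _ _)
  rw [betti_inter_eq_length_add_length, add_comm]
  exact add_le_add hrange (length_ker_mayerVietorisMap_le h₁ h₂)

theorem betti_add_betti_le_betti_inter (h₁ : IsOpen U₁) (h₂ : IsOpen U₂)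
    (h : betti n (U₁ ∪ U₂) = 0) : betti n U₁ + betti n U₂ ≤ betti n (U₁ ∩ U₂) :=
  (Module.length_prod ℚ _ _).symm.trans_le
    (Module.length_le_of_surjective _ (mayerVietorisMap_surjective h₁ h₂ h))

theorem betti_union_le_betti_inter (h₁ : IsOpen U₁) (h₂ : IsOpen U₂)
    (hb₁ : betti (n + 1) U₁ = 0) (hb₂ : betti (n + 1) U₂ = 0) :
    betti (n + 1) (U₁ ∪ U₂) ≤ betti n (U₁ ∩ U₂) :=
  (betti_union_le_length_ker_mayerVietorisMap h₁ h₂ hb₁ hb₂).trans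
    (length_submodule_le _)

theorem betti_add_betti_add_betti_union_le (h₁ : IsOpen U₁) (h₂ : IsOpen U₂)
    (hb₁ : betti (n + 1) U₁ = 0) (hb₂ : betti (n + 1) U₂ = 0) (h : betti n (U₁ ∪ U₂) = 0) :
    betti n U₁ + betti n U₂ + betti (n + 1) (U₁ ∪ U₂) ≤ betti n (U₁ ∩ U₂) := by
  rw [betti_inter_eq_length_add_length,
    LinearMap.range_eq_top.2 (mayerVietorisMap_surjective h₁ h₂ h), Module.length_top,
    Module.length_prod, add_comm]
  exact add_le_add_left (betti_union_le_length_ker_mayerVietorisMap h₁ h₂ hb₁ hb₂) _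

theorem betti_inter_eq_betti_union (h₁ : IsOpen U₁) (h₂ : IsOpen U₂)
    (hb₁ : betti n U₁ = 0) (hb₂ : betti n U₂ = 0)
    (hb₁' : betti (n + 1) U₁ = 0) (hb₂' : betti (n + 1) U₂ = 0) :
    betti n (U₁ ∩ U₂) = betti (n + 1) (U₁ ∪ U₂) :=
  le_antisymm (by simpa [hb₁, hb₂] using betti_inter_le (n := n) h₁ h₂)
    (betti_union_le_betti_inter h₁ h₂ hb₁' hb₂')

lemma mem_boundaries_inter (h₁ : IsOpen U₁) (h₂ : IsOpen U₂)
    (h : betti (n + 1) (U₁ ∪ U₂) = 0) (hc : c ∈ cycles n (U₁ ∩ U₂))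
    (hc₁ : c ∈ boundaries n U₁) (hc₂ : c ∈ boundaries n U₂) :
    c ∈ boundaries n (U₁ ∩ U₂) := by
  have hker : LinearMap.ker (mayerVietorisMap n U₁ U₂) = ⊥ := by
    have hlen := length_ker_mayerVietorisMap_le (n := n) h₁ h₂
    rw [h, nonpos_iff_eq_zero, Module.length_eq_zero_iff] at hlen
    exact Submodule.eq_bot_of_subsingleton
  have hmem := homologyClass_mem_ker_mayerVietorisMap (z := ⟨c, hc⟩).2 ⟨hc₁, hc₂⟩
  rw [hker, Submodule.mem_bot] at hmem
  exact homologyClass_eq_zero_iff.1 hmem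

end MayerVietoris

section Acyclic

variable {V : Type*} [NormedAddCommGroup V] [NormedSpace ℝ V] {n : ℕ} {v : V} {U : Set V}

lemma cone_mem_chains (hv : v ∈ U) (hU : StarConvex ℝ v U) {c : AffineChain V}
    (hc : c ∈ chains n U) : cone v c ∈ chains (n + 1) U := by
  refine cone_mem_supported (Q := {l | l.length = n + 1 ∧ simplex l ⊆ U})
    (fun l hl ↦ ⟨by simp [hl.1], ?_⟩) hc
  have hset : {x | x ∈ v :: l} = insert v {x | x ∈ l} := by ext; simp
  rw [simplex, hset]
  rcases {x | x ∈ l}.eq_empty_or_nonempty with he | he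
  · simpa [he] using hv
  · rw [convexHull_insert he, convexJoin_singleton_left]
    exact iUnion₂_subset fun y hy ↦ hU.segment_subset (hl.2 hy)

theorem betti_eq_zero_of_starConvex (n : ℕ) (hv : v ∈ U) (hU : StarConvex ℝ v U) :
    betti n U = 0 := by
  refine betti_eq_zero_iff.2 fun z hz ↦ ?_
  obtain ⟨hz, hz₀⟩ := mem_cycles.1 hz
  exact ⟨cone v z, cone_mem_chains hv hU hz, by rw [boundary_cone, hz₀, map_zero, sub_zero]⟩

lemma betti_succ_empty (n : ℕ) : betti (n + 1) (∅ : Set V) = 0 := by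
  refine betti_eq_zero_iff.2 fun z hz ↦ ?_
  have hz' : z ∈ Finsupp.supported ℚ ℚ (∅ : Set (List V)) := by
    refine Finsupp.supported_mono ?_ (mem_cycles.1 hz).1
    rintro (_ | ⟨v, l⟩) ⟨hn, hl⟩
    · simp at hn
    · exact hl (mem_simplex List.mem_cons_self)
  rw [Finsupp.supported_empty, Submodule.mem_bot] at hz'
  simp [hz']

lemma betti_zero_of_nonempty (hU : U.Nonempty) : betti 0 U = 0 := by
  obtain ⟨v, hv⟩ := hU
  have h₀ : chains 0 {v} = chains 0 U := by
    refine congrArg (Finsupp.supported ℚ ℚ) (Set.ext fun l ↦ and_congr_right fun hl ↦ ?_)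
    simp [List.length_eq_zero_iff.1 hl, simplex]
  refine betti_eq_zero_iff.2 fun z hz ↦ boundaries_mono (singleton_subset_iff.2 hv) ?_
  refine betti_eq_zero_iff.1
    (betti_eq_zero_of_starConvex 0 (mem_singleton v) (starConvex_singleton v)) ?_
  rwa [cycles, h₀]

lemma exists_mem_chains_of_mem_chains_iUnion {U : ℕ → Set V} (ho : ∀ j, IsOpen (U j))
    (hU : Monotone U) {c : AffineChain V} (hc : c ∈ chains n (⋃ j, U j)) :
    ∃ j, c ∈ chains n (U j) := by
  have hsimplex : ∀ l ∈ c.support, ∃ j, simplex l ⊆ U j := fun l hl ↦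
    (isCompact_simplex l).elim_directed_cover U ho (hc hl).2 hU.directed_le
  choose! J hJ using hsimplex
  exact ⟨c.support.sup J, fun l hl ↦ ⟨(hc hl).1, (hJ l hl).trans (hU (Finset.le_sup hl))⟩⟩

end Acyclic

section Components

open scoped Function

variable {V ι : Type*} {W : ι → Set V} {x y : V} {i : ι}

/-- The number of vertices in each of the sets `W i`, extended linearly to chains. -/
noncomputable def vertexCount (W : ι → Set V) : AffineChain V →ₗ[ℚ] ι → ℚ :=
  Finsupp.linearCombination ℚ fun l i ↦ (l.map ((W i).indicator 1)).sum

lemma vertexCount_single_singleton [DecidableEq ι] (hd : Pairwise (Disjoint on W))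
    (hx : x ∈ W i) : vertexCount W (Finsupp.single [x] 1) = Pi.single i 1 := by
  ext j
  rcases eq_or_ne i j with rfl | hj
  · simp [vertexCount, hx]
  · simp [vertexCount, hj.symm, disjoint_left.1 (hd hj) hx]

variable [NormedAddCommGroup V] [NormedSpace ℝ V] {U : Set V} {w : ι → V} {c : AffineChain V}

lemma single_singleton_mem_chains (hx : x ∈ U) :
    (Finsupp.single [x] 1 : AffineChain V) ∈ chains 1 U :=
  single_mem_chains rfl (by simpa [simplex_singleton] using hx)

lemma exists_eq_singleton_of_length_eq_one {l : List V} (hl : l.length = 1)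
    (hsub : simplex l ⊆ ⋃ i, W i) : ∃ x i, l = [x] ∧ x ∈ W i := by
  obtain ⟨x, rfl⟩ := List.length_eq_one_iff.1 hl
  obtain ⟨i, hi⟩ := mem_iUnion.1 (hsub (mem_simplex (List.mem_singleton_self x)))
  exact ⟨x, i, rfl, hi⟩

lemma single_sub_single_mem_boundaries (ho : IsOpen U) (hU : IsPreconnected U)
    (hx : x ∈ U) (hy : y ∈ U) :
    (Finsupp.single [x] 1 - Finsupp.single [y] 1 : AffineChain V) ∈ boundaries 1 U := by
  refine hU.induction₂ (fun x y ↦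
    (Finsupp.single [x] 1 - Finsupp.single [y] 1 : AffineChain V) ∈ boundaries 1 U)
    (fun x hx ↦ ?_) (fun x y z _ _ _ hxy hyz ↦ ?_) (fun x y _ _ hxy ↦ ?_) hx hy
  · obtain ⟨ε, hε, hball⟩ := Metric.isOpen_iff.1 ho x hx
    refine mem_nhdsWithin_of_mem_nhds (Filter.mem_of_superset (ball_mem_nhds x hε) fun y hy ↦ ?_)
    have hsub : simplex [y, x] ⊆ U :=
      ((simplex_subset_iff (convex_ball x ε)).2 (by simpa [hε] using hy)).trans hball
    exact ⟨_, single_mem_chains rfl hsub, boundary_single_pair y x⟩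
  · simpa using Submodule.add_mem _ hxy hyz
  · simpa using Submodule.neg_mem _ hxy

lemma exists_subset_of_isPreconnected_of_subset_iUnion {X : Type*} [TopologicalSpace X]
    {W : ι → Set X} (ho : ∀ i, IsOpen (W i)) (hd : Pairwise (Disjoint on W)) {s : Set X}
    (hs : IsPreconnected s) (hsub : s ⊆ ⋃ i, W i) (hne : s.Nonempty) : ∃ i, s ⊆ W i := by
  obtain ⟨x, hx⟩ := hne
  obtain ⟨i, hi⟩ := mem_iUnion.1 (hsub hx)
  refine ⟨i, hs.subset_left_of_subset_union (v := ⋃ j : {j // j ≠ i}, W j) (ho i)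
    (isOpen_iUnion fun j ↦ ho j) (disjoint_iUnion_right.2 fun j ↦ hd j.2.symm)
    (fun z hz ↦ ?_) ⟨x, hx, hi⟩⟩
  obtain ⟨j, hj⟩ := mem_iUnion.1 (hsub hz)
  rcases eq_or_ne j i with rfl | hji
  exacts [.inl hj, .inr (mem_iUnion.2 ⟨⟨j, hji⟩, hj⟩)]

lemma vertexCount_boundary (ho : ∀ i, IsOpen (W i)) (hd : Pairwise (Disjoint on W))
    (hc : c ∈ chains 2 (⋃ i, W i)) : vertexCount W (boundary c) = 0 := by
  classical
  refine (Submodule.mem_bot ℚ).1 (map_mem_of_mem_supported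
    (f := vertexCount W ∘ₗ boundary) (N := ⊥) (fun l hl ↦ ?_) hc)
  obtain ⟨x, y, rfl⟩ := List.length_eq_two.1 hl.1
  obtain ⟨i, hi⟩ := exists_subset_of_isPreconnected_of_subset_iUnion ho hd
    (convex_convexHull ℝ _).isPreconnected hl.2 ⟨x, mem_simplex List.mem_cons_self⟩
  have hx : x ∈ W i := hi (mem_simplex List.mem_cons_self)
  have hy : y ∈ W i := hi (mem_simplex (by simp))
  rw [LinearMap.comp_apply, boundary_single_pair, map_sub, vertexCount_single_singleton hd hx,
    vertexCount_single_singleton hd hy, sub_self]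
  exact Submodule.zero_mem _

lemma boundary_eq_sum_vertexCount_smul [Fintype ι] (hd : Pairwise (Disjoint on W))
    (hc : c ∈ chains 1 (⋃ i, W i)) :
    boundary c = ∑ i, vertexCount W c i • Finsupp.single [] 1 := by
  classical
  rw [← Fintype.linearCombination_apply ℚ, ← sub_eq_zero]
  refine (Submodule.mem_bot ℚ).1 (map_mem_of_mem_supported
    (f := boundary - Fintype.linearCombination ℚ _ ∘ₗ vertexCount W) (N := ⊥) (fun l hl ↦ ?_) hc)
  obtain ⟨x, i, rfl, hx⟩ := exists_eq_singleton_of_length_eq_one hl.1 hl.2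
  simp [vertexCount_single_singleton hd hx, boundary_single_singleton]

lemma sub_sum_vertexCount_smul_mem_boundaries [Fintype ι] (ho : ∀ i, IsOpen (W i))
    (hW : ∀ i, IsPreconnected (W i)) (hd : Pairwise (Disjoint on W))
    (hw : ∀ i, w i ∈ W i) (hc : c ∈ chains 1 (⋃ i, W i)) :
    c - ∑ i, vertexCount W c i • Finsupp.single [w i] 1 ∈ boundaries 1 (⋃ i, W i) := by
  classical
  rw [← Fintype.linearCombination_apply ℚ]
  refine map_mem_of_mem_supported
    (f := LinearMap.id - Fintype.linearCombination ℚ _ ∘ₗ vertexCount W) (fun l hl ↦ ?_) hc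
  obtain ⟨x, i, rfl, hx⟩ := exists_eq_singleton_of_length_eq_one hl.1 hl.2
  simpa [vertexCount_single_singleton hd hx] using boundaries_mono (subset_iUnion W i)
    (single_sub_single_mem_boundaries (ho i) (hW i) hx (hw i))

lemma ker_vertexCount_domRestrict [Finite ι] (ho : ∀ i, IsOpen (W i))
    (hW : ∀ i, IsPreconnected (W i)) (hne : ∀ i, (W i).Nonempty)
    (hd : Pairwise (Disjoint on W)) :
    LinearMap.ker ((vertexCount W).domRestrict (cycles 1 (⋃ i, W i))) =
      (boundaries 1 (⋃ i, W i)).submoduleOf (cycles 1 (⋃ i, W i)) := by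
  have := Fintype.ofFinite ι
  choose w hw using hne
  ext ⟨c, hc⟩
  change vertexCount W c = 0 ↔ c ∈ boundaries 1 (⋃ i, W i)
  refine ⟨fun h ↦ ?_, ?_⟩
  · simpa [h] using sub_sum_vertexCount_smul_mem_boundaries ho hW hd hw (mem_cycles.1 hc).1
  · rintro ⟨e, he, rfl⟩
    exact vertexCount_boundary ho hd he

lemma range_vertexCount_domRestrict [Fintype ι] (hne : ∀ i, (W i).Nonempty)
    (hd : Pairwise (Disjoint on W)) :
    LinearMap.range ((vertexCount W).domRestrict (cycles 1 (⋃ i, W i))) =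
      LinearMap.ker (Fintype.linearCombination ℚ fun _ : ι ↦ (1 : ℚ)) := by
  classical
  choose w hw using hne
  ext f
  simp only [LinearMap.mem_range, LinearMap.domRestrict_apply, Subtype.exists, mem_cycles,
    LinearMap.mem_ker, Fintype.linearCombination_apply, smul_eq_mul, mul_one]
  constructor
  · rintro ⟨c, ⟨hc, hc₀⟩, rfl⟩
    rw [boundary_eq_sum_vertexCount_smul hd hc, ← Finset.sum_smul] at hc₀
    exact (smul_eq_zero.1 hc₀).resolve_right (by simp)
  · intro hf
    have hc : ∑ i, f i • (Finsupp.single [w i] 1 : AffineChain V) ∈ chains 1 (⋃ i, W i) :=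
      Submodule.sum_mem _ fun i _ ↦
        Submodule.smul_mem _ _ (single_singleton_mem_chains (mem_iUnion_of_mem i (hw i)))
    have hcount : vertexCount W (∑ i, f i • Finsupp.single [w i] 1) = f := by
      ext j
      simp only [map_sum, map_smul, vertexCount_single_singleton hd (hw _)]
      simp [Pi.single_apply]
    refine ⟨_, ⟨hc, ?_⟩, hcount⟩
    rw [boundary_eq_sum_vertexCount_smul hd hc, hcount, ← Finset.sum_smul, hf, zero_smul]

theorem betti_one_iUnion_add_one [Fintype ι] [Nonempty ι] (ho : ∀ i, IsOpen (W i))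
    (hW : ∀ i, IsPreconnected (W i)) (hne : ∀ i, (W i).Nonempty)
    (hd : Pairwise (Disjoint on W)) : betti 1 (⋃ i, W i) + 1 = Fintype.card ι := by
  classical
  have hsum : Function.Surjective (Fintype.linearCombination ℚ fun _ : ι ↦ (1 : ℚ)) :=
    fun r ↦ ⟨Pi.single (Classical.arbitrary ι) r, by simp⟩
  have hcard := Module.length_eq_add_of_exact _ _ (Submodule.subtype_injective _) hsum
    (LinearMap.exact_subtype_ker_map _)
  rw [Module.length_eq_one ℚ ℚ, Module.length_eq_finrank, Module.finrank_fintype_fun_eq_card,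
    ← range_vertexCount_domRestrict hne hd, ← (LinearMap.quotKerEquivRange _).length_eq,
    ker_vertexCount_domRestrict ho hW hne hd] at hcard
  exact hcard.symm

end Components

end AffineChain

open AffineChain

section ConicalCompl

variable {E : Type*} [NormedAddCommGroup E] [NormedSpace ℝ E] {K L : Set E} {p : E × ℝ} {q : ℕ}

/-- The open cone over `A × {1}` in `E × ℝ`. -/
def openCone (A : Set E) : Set (E × ℝ) := {p | 0 < p.2 ∧ p.2⁻¹ • p.1 ∈ A}

/-- The complement in `E × ℝ` of the closed cone over `K × {1}`. It plays the role of the complement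
of `K` in the one-point compactification of `E`, to which it is homotopy equivalent. -/
def conicalCompl (K : Set E) : Set (E × ℝ) := {p | p ≠ 0 ∧ p ∉ openCone K}

lemma mem_conicalCompl : p ∈ conicalCompl K ↔ p ≠ 0 ∧ (0 < p.2 → p.2⁻¹ • p.1 ∉ K) := by
  simp [conicalCompl, openCone]

lemma conicalCompl_union (K L : Set E) :
    conicalCompl (K ∪ L) = conicalCompl K ∩ conicalCompl L := by
  ext p
  simp only [mem_conicalCompl, mem_inter_iff, mem_union]
  tauto

lemma conicalCompl_inter (K L : Set E) :
    conicalCompl (K ∩ L) = conicalCompl K ∪ conicalCompl L := by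
  ext p
  simp only [mem_conicalCompl, mem_inter_iff, mem_union]
  tauto

lemma conicalCompl_iInter {ι : Type*} [Nonempty ι] (K : ι → Set E) :
    conicalCompl (⋂ j, K j) = ⋃ j, conicalCompl (K j) := by
  ext p
  by_cases hp : 0 < p.2 <;> simp [mem_conicalCompl, hp]

lemma conicalCompl_anti (h : K ⊆ L) : conicalCompl L ⊆ conicalCompl K :=
  fun _ hp ↦ ⟨hp.1, fun hpK ↦ hp.2 ⟨hpK.1, h hpK.2⟩⟩

lemma zero_neg_one_mem_conicalCompl (K : Set E) : ((0, -1) : E × ℝ) ∈ conicalCompl K := by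
  simp [mem_conicalCompl, (by norm_num : ¬ (0 : ℝ) < -1)]

lemma isOpen_openCone {A : Set E} (hA : IsOpen A) : IsOpen (openCone A) := by
  refine ContinuousOn.isOpen_inter_preimage (f := fun p : E × ℝ ↦ p.2⁻¹ • p.1) ?_
    (isOpen_lt continuous_const continuous_snd) hA
  exact (continuousOn_snd.inv₀ fun p hp ↦ ne_of_gt hp).smul continuousOn_fst

lemma conicalCompl_eq_union {R : ℝ} (hR : 0 < R) (hKR : K ⊆ closedBall 0 R) :
    conicalCompl K = {p | R * p.2 < ‖p.1‖} ∪ openCone Kᶜ := by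
  ext ⟨y, r⟩
  simp only [mem_conicalCompl, openCone, mem_union, mem_ofPred_eq, mem_compl_iff]
  rcases lt_or_ge 0 r with hr | hr
  · have hy : R * r < ‖y‖ → r⁻¹ • y ∉ K := fun h hyK ↦ by
      have := hKR hyK
      rw [mem_closedBall_zero_iff, norm_smul, norm_inv, Real.norm_of_nonneg hr.le,
        inv_mul_le_iff₀ hr] at this
      linarith
    have h₀ : (y, r) ≠ 0 := fun h ↦ hr.ne' (congrArg Prod.snd h)
    tauto
  · have hRr : R * r ≤ 0 := mul_nonpos_of_nonneg_of_nonpos hR.le hr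
    have h₀ : (y, r) ≠ 0 ↔ R * r < ‖y‖ := by
      refine ⟨fun h ↦ (hRr.trans (norm_nonneg y)).lt_of_ne fun h' ↦ h ?_, ?_⟩
      · have hy : ‖y‖ = 0 := (h'.ge.trans hRr).antisymm (norm_nonneg y)
        have hr₀ : R * r = 0 := h'.trans hy
        exact Prod.ext (norm_eq_zero.1 hy) ((mul_eq_zero.1 hr₀).resolve_left hR.ne')
      · rintro h ⟨⟩
        simp at h
    simp [h₀, hr.not_gt]

lemma isOpen_conicalCompl (hK : IsCompact K) : IsOpen (conicalCompl K) := by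
  obtain ⟨R, hR, hKR⟩ := hK.isBounded.subset_closedBall_lt 0 0
  rw [conicalCompl_eq_union hR hKR]
  exact (isOpen_lt (continuous_const.mul continuous_snd) continuous_fst.norm).union
    (isOpen_openCone hK.isClosed.isOpen_compl)

lemma starConvex_setOf_forall_ne_smul {W : Type*} [AddCommGroup W] [Module ℝ W] {w : W}
    (hw : w ≠ 0) : StarConvex ℝ (-w) {p | ∀ s : ℝ, 0 ≤ s → p ≠ s • w} := by
  intro p hp a b ha hb hab s hs h
  rcases hb.eq_or_lt with rfl | hb
  · have : (a + s) • w = 0 := by rw [add_smul, ← h]; simp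
    exact hw ((smul_eq_zero.1 this).resolve_left (by linarith))
  · refine hp ((s + a) / b) (by positivity) ?_
    rw [div_eq_inv_mul, mul_smul, add_smul, ← h, eq_inv_smul_iff₀ hb.ne']
    simp

lemma conicalCompl_singleton (x : E) :
    conicalCompl {x} = {p : E × ℝ | ∀ s : ℝ, 0 ≤ s → p ≠ s • (x, 1)} := by
  ext ⟨y, r⟩
  simp only [mem_conicalCompl, mem_singleton_iff, mem_ofPred_eq, ne_eq, Prod.smul_mk, smul_eq_mul,
    mul_one, Prod.mk.injEq, not_and']
  refine ⟨fun h s hs hr hy ↦ ?_, fun h ↦ ⟨fun h₀ ↦ h 0 le_rfl ?_ ?_, fun hr hx ↦ ?_⟩⟩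
  · subst hr hy
    rcases hs.eq_or_lt with rfl | hs
    · simp at h
    · exact h.2 hs (inv_smul_smul₀ hs.ne' x)
  · exact congrArg Prod.snd h₀
  · simpa using congrArg Prod.fst h₀
  · exact h r hr.le rfl ((inv_smul_eq_iff₀ hr.ne').1 hx)

theorem betti_conicalCompl_singleton (q : ℕ) (x : E) : betti q (conicalCompl {x}) = 0 := by
  rw [conicalCompl_singleton]
  refine betti_eq_zero_of_starConvex q (v := -(x, 1)) (fun s hs h ↦ ?_)
    (starConvex_setOf_forall_ne_smul (by simp))
  have := congrArg Prod.snd h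
  simp at this
  linarith

lemma mem_boundaries_conicalCompl_union (hK : IsCompact K) (hL : IsCompact L)
    (h : betti (q + 1) (conicalCompl (K ∩ L)) = 0) {c : AffineChain (E × ℝ)}
    (hc : c ∈ cycles q (conicalCompl (K ∪ L))) (hcK : c ∈ boundaries q (conicalCompl K))
    (hcL : c ∈ boundaries q (conicalCompl L)) : c ∈ boundaries q (conicalCompl (K ∪ L)) := by
  rw [conicalCompl_union] at hc ⊢
  rw [conicalCompl_inter] at h
  exact mem_boundaries_inter (isOpen_conicalCompl hK) (isOpen_conicalCompl hL) h hc hcK hcL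

lemma exists_mem_boundaries_conicalCompl_of_iInter {K : ℕ → Set E} (hK : ∀ j, IsCompact (K j))
    (hanti : Antitone K) {c : AffineChain (E × ℝ)}
    (hc : c ∈ boundaries q (conicalCompl (⋂ j, K j))) :
    ∃ j, c ∈ boundaries q (conicalCompl (K j)) := by
  rw [conicalCompl_iInter] at hc
  obtain ⟨e, he, rfl⟩ := hc
  obtain ⟨j, hj⟩ := exists_mem_chains_of_mem_chains_iUnion (fun j ↦ isOpen_conicalCompl (hK j))
    (fun _ _ h ↦ conicalCompl_anti (hanti h)) he
  exact ⟨j, boundary_mem_boundaries hj⟩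

lemma iInter_closedBall_one_div (c : ℝ) : ⋂ j : ℕ, closedBall c (1 / (j + 1)) = {c} := by
  refine Subset.antisymm (fun x hx ↦ ?_) ?_
  · exact dist_le_zero.1 (ge_of_tendsto' tendsto_one_div_add_atTop_nhds_zero_nat
      fun j ↦ mem_iInter.1 hx j)
  · exact singleton_subset_iff.2 (mem_iInter.2 fun j ↦ mem_closedBall_self (by positivity))

lemma Icc_induction {P : ℝ → ℝ → Prop} {u v : ℝ} (huv : u ≤ v)
    (hloc : ∀ c ∈ Icc u v, ∃ ε > 0, ∀ a b, a ≤ b → a ∈ ball c ε → b ∈ ball c ε → P a b)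
    (hglue : ∀ a b c, u ≤ a → a ≤ b → b ≤ c → c ≤ v → P a b → P b c → P a c) : P u v := by
  choose! ε hε hP using hloc
  obtain ⟨t, ht₀, htm, ⟨N, hN⟩, ht⟩ := exists_monotone_Icc_subset_open_cover_Icc huv
    (c := fun i : Icc u v ↦ Subtype.val ⁻¹' ball i.1 (ε i))
    (fun i ↦ isOpen_ball.preimage continuous_subtype_val)
    (fun x _ ↦ mem_iUnion.2 ⟨x, mem_ball_self (hε x x.2)⟩)
  have hstep : ∀ n, P (t n) (t (n + 1)) := fun n ↦ by
    obtain ⟨i, hi⟩ := ht n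
    have hle : t n ≤ t (n + 1) := htm n.le_succ
    exact hP i i.2 _ _ hle (hi ⟨le_rfl, hle⟩) (hi ⟨hle, le_rfl⟩)
  have hmain : ∀ n, P u (t (n + 1)) := fun n ↦ by
    induction n with
    | zero => simpa only [ht₀] using hstep 0
    | succ n ih => exact hglue _ _ _ le_rfl (t _).2.1 (htm (Nat.le_succ _)) (t _).2.2 ih (hstep _)
  simpa only [hN (N + 1) N.le_succ] using hmain N

section Slices

variable {Y : Type*} [TopologicalSpace Y] {X : Set Y} {f : Y → ℝ} {φ : Y → E}

lemma isCompact_image_inter_preimage {Z W : Type*} [TopologicalSpace Z] [TopologicalSpace W]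
    {φ : Y → Z} {f : Y → W} {T : Set W} (hX : IsCompact X) (hf : Continuous f)
    (hφ : ContinuousOn φ X) (hT : IsClosed T) : IsCompact (φ '' (X ∩ f ⁻¹' T)) :=
  (hX.inter_right (hT.preimage hf)).image_of_continuousOn (hφ.mono inter_subset_left)

lemma exists_mem_boundaries_image_inter_preimage_closedBall (hX : IsCompact X) (hf : Continuous f)
    (hφ : ContinuousOn φ X) (hi : InjOn φ X) {c : ℝ} {z : AffineChain (E × ℝ)}
    (hz : z ∈ boundaries q (conicalCompl (φ '' (X ∩ f ⁻¹' {c})))) :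
    ∃ ε > 0, z ∈ boundaries q (conicalCompl (φ '' (X ∩ f ⁻¹' closedBall c ε))) := by
  rw [← iInter_closedBall_one_div, preimage_iInter, inter_iInter,
    InjOn.image_iInter_eq (hi.mono (iUnion_subset fun _ ↦ inter_subset_left))] at hz
  obtain ⟨j, hj⟩ := exists_mem_boundaries_conicalCompl_of_iInter
    (fun j ↦ isCompact_image_inter_preimage hX hf hφ isClosed_closedBall)
    (fun a b hab ↦ by gcongr) hz
  exact ⟨1 / (j + 1), by positivity, hj⟩

theorem betti_conicalCompl_image_eq_zero_of_slices (hX : IsCompact X) (hf : Continuous f)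
    (hφ : ContinuousOn φ X) (hi : InjOn φ X) {u v : ℝ} (huv : u ≤ v) (hXf : MapsTo f X (Icc u v))
    (h : ∀ c ∈ Icc u v, ∀ r ∈ Icc q (q + 1), betti r (conicalCompl (φ '' (X ∩ f ⁻¹' {c}))) = 0) :
    betti q (conicalCompl (φ '' X)) = 0 := by
  refine betti_eq_zero_iff.2 fun z hz ↦ ?_
  have hcyc : ∀ T, z ∈ cycles q (conicalCompl (φ '' (X ∩ f ⁻¹' T))) := fun T ↦
    cycles_mono (conicalCompl_anti (image_mono inter_subset_left)) hz
  rw [← inter_eq_left.2 hXf]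
  refine Icc_induction (P := fun a b ↦ z ∈ boundaries q (conicalCompl (φ '' (X ∩ f ⁻¹' Icc a b))))
    huv (fun c hc ↦ ?_) (fun a b c ha hab hbc hcv hz₁ hz₂ ↦ ?_)
  · obtain ⟨ε, hε, hzε⟩ := exists_mem_boundaries_image_inter_preimage_closedBall hX hf hφ hi
      (betti_eq_zero_iff.1 (h c hc q (left_mem_Icc.2 q.le_succ)) (hcyc _))
    refine ⟨ε, hε, fun a b _ ha hb ↦ boundaries_mono (conicalCompl_anti ?_) hzε⟩
    gcongr
    exact (convex_closedBall c ε).ordConnected.out (ball_subset_closedBall ha)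
      (ball_subset_closedBall hb)
  · have hunion : φ '' (X ∩ f ⁻¹' Icc a c) =
        φ '' (X ∩ f ⁻¹' Icc a b) ∪ φ '' (X ∩ f ⁻¹' Icc b c) := by
      rw [← image_union, ← inter_union_distrib_left, ← preimage_union,
        Icc_union_Icc_eq_Icc hab hbc]
    have hinter : φ '' (X ∩ f ⁻¹' Icc a b) ∩ φ '' (X ∩ f ⁻¹' Icc b c) =
        φ '' (X ∩ f ⁻¹' {b}) := by
      rw [← hi.image_inter inter_subset_left inter_subset_left, ← inter_inter_distrib_left,
        ← preimage_inter, Icc_inter_Icc_eq_singleton hab hbc]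
    rw [hunion]
    refine mem_boundaries_conicalCompl_union
      (isCompact_image_inter_preimage hX hf hφ isClosed_Icc)
      (isCompact_image_inter_preimage hX hf hφ isClosed_Icc) ?_ (hunion ▸ hcyc _) hz₁ hz₂
    rw [hinter]
    exact h b ⟨ha.trans hab, hbc.trans hcv⟩ (q + 1) (right_mem_Icc.2 q.le_succ)

end Slices

end ConicalCompl

section Slice

variable {D : ℕ} {X : Set (Fin (D + 1) → ℝ)} {c : ℝ}

/-- The slice of `X` where the first coordinate is `c`. -/
def slice (X : Set (Fin (D + 1) → ℝ)) (c : ℝ) : Set (Fin D → ℝ) := Matrix.vecCons c ⁻¹' X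

lemma vecCons_image_slice (X : Set (Fin (D + 1) → ℝ)) (c : ℝ) :
    Matrix.vecCons c '' slice X c = X ∩ (fun x ↦ x 0) ⁻¹' {c} := by
  rw [slice, image_preimage_eq_inter_range]
  congr 1
  ext x
  exact ⟨by rintro ⟨y, rfl⟩; rfl, fun h ↦ ⟨Matrix.vecTail x, h ▸ Matrix.cons_head_tail x⟩⟩

lemma isEmbedding_vecCons (c : ℝ) :
    Topology.IsEmbedding (Matrix.vecCons c : (Fin D → ℝ) → Fin (D + 1) → ℝ) :=
  Function.LeftInverse.isEmbedding (Matrix.tail_cons c)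
    (continuous_pi fun i ↦ continuous_apply i.succ) (continuous_const.finCons continuous_id)

lemma isCompact_slice (hX : IsCompact X) (c : ℝ) : IsCompact (slice X c) := by
  rw [(isEmbedding_vecCons c).isInducing.isCompact_iff, vecCons_image_slice]
  exact hX.inter_right (isClosed_singleton.preimage (continuous_apply 0))

lemma convex_slice (hX : Convex ℝ X) (c : ℝ) : Convex ℝ (slice X c) := by
  intro x hx y hy a b ha hb hab
  have hcons : Matrix.vecCons c (a • x + b • y) =
      a • Matrix.vecCons c x + b • Matrix.vecCons c y := by
    rw [Matrix.smul_cons, Matrix.smul_cons, Matrix.cons_add_cons, ← add_smul, hab, one_smul]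
  rw [slice, mem_preimage, hcons]
  exact hX hx hy ha hb hab

lemma nonempty_slice (h : c ∈ (fun x ↦ x 0) '' X) : (slice X c).Nonempty := by
  obtain ⟨x, hx, rfl⟩ := h
  exact ⟨Matrix.vecTail x, (Matrix.cons_head_tail x).symm ▸ hx⟩

end Slice

section Cells

variable {E : Type*} [NormedAddCommGroup E] [NormedSpace ℝ E] {D q N : ℕ}

lemma betti_conicalCompl_image_eq_zero_of_slice {X : Set (Fin (D + 1) → ℝ)}
    {φ : (Fin (D + 1) → ℝ) → E} (hX : IsCompact X) (hφ : ContinuousOn φ X) (hi : InjOn φ X)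
    {u v : ℝ} (huv : u ≤ v) (hXf : MapsTo (fun x ↦ x 0) X (Icc u v))
    (h : ∀ c ∈ Icc u v, ∀ r ∈ Icc q (q + 1), ContinuousOn (φ ∘ Matrix.vecCons c) (slice X c) →
      InjOn (φ ∘ Matrix.vecCons c) (slice X c) →
        betti r (conicalCompl ((φ ∘ Matrix.vecCons c) '' slice X c)) = 0) :
    betti q (conicalCompl (φ '' X)) = 0 := by
  refine betti_conicalCompl_image_eq_zero_of_slices hX (continuous_apply 0) hφ hi huv hXf
    fun c hc r hr ↦ ?_
  have hcons := isEmbedding_vecCons (D := D) c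
  rw [← vecCons_image_slice, ← image_comp]
  exact h c hc r hr (hφ.comp hcons.continuous.continuousOn (mapsTo_preimage _ _))
    (hi.comp hcons.injective.injOn (mapsTo_preimage _ _))

lemma betti_conicalCompl_image_of_convex_pi {X : Set (Fin D → ℝ)} {φ : (Fin D → ℝ) → E}
    (hX : IsCompact X) (hconv : Convex ℝ X) (hne : X.Nonempty) (hφ : ContinuousOn φ X)
    (hi : InjOn φ X) : betti q (conicalCompl (φ '' X)) = 0 := by
  induction D generalizing q with
  | zero =>
    obtain ⟨x, rfl⟩ :=
      X.subsingleton_of_subsingleton.eq_empty_or_singleton.resolve_left hne.ne_empty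
    rw [image_singleton]
    exact betti_conicalCompl_singleton q _
  | succ D ih =>
    have himage := eq_Icc_of_connected_compact
      ((hconv.isConnected hne).image _ (continuous_apply 0).continuousOn)
      (hX.image (continuous_apply 0))
    refine betti_conicalCompl_image_eq_zero_of_slice hX hφ hi
      (nonempty_Icc.1 (himage ▸ hne.image _)) (mapsTo_iff_image_subset.2 himage.subset)
      fun c hc r _ ↦ ih (isCompact_slice hX c) (convex_slice hconv c) (nonempty_slice ?_)
    rwa [himage]

lemma betti_conicalCompl_image_of_add_le_pi (hE : ∀ q ≤ N, betti q (conicalCompl (∅ : Set E)) = 0)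
    {X : Set (Fin D → ℝ)} {φ : (Fin D → ℝ) → E} (hX : IsCompact X) (hφ : ContinuousOn φ X)
    (hi : InjOn φ X) (hq : q + D ≤ N) : betti q (conicalCompl (φ '' X)) = 0 := by
  induction D generalizing q with
  | zero =>
    rcases X.subsingleton_of_subsingleton.eq_empty_or_singleton with rfl | ⟨x, rfl⟩
    · rw [image_empty]
      exact hE q (by lia)
    · rw [image_singleton]
      exact betti_conicalCompl_singleton q _
  | succ D ih =>
    obtain ⟨R, hR, hXR⟩ := hX.isBounded.subset_closedBall_lt 0 0
    refine betti_conicalCompl_image_eq_zero_of_slice hX hφ hi (u := -R) (v := R) (by linarith)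
      (fun x hx ↦ abs_le.1 ?_) fun c _ r hr hφc hic ↦
        ih (isCompact_slice hX c) hφc hic (by have := hr.2; lia)
    exact (norm_le_pi_norm x 0).trans (mem_closedBall_zero_iff.1 (hXR hx))

variable {V : Type*} [NormedAddCommGroup V] [NormedSpace ℝ V] [FiniteDimensional ℝ V] {X : Set V}
  {φ : V → E}

theorem betti_conicalCompl_image_of_convex (hX : IsCompact X) (hconv : Convex ℝ X)
    (hne : X.Nonempty) (hφ : ContinuousOn φ X) (hi : InjOn φ X) :
    betti q (conicalCompl (φ '' X)) = 0 := by
  let e : V ≃L[ℝ] (Fin (Module.finrank ℝ V) → ℝ) := .ofFinrankEq (by simp)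
  rw [← e.symm_image_image X, image_image]
  have hmaps : MapsTo e.symm (e '' X) X := mapsTo_iff_image_subset.2 (e.symm_image_image X).subset
  exact betti_conicalCompl_image_of_convex_pi (hX.image e.continuous)
    (hconv.linear_image e.toLinearMap) (hne.image e)
    (hφ.comp e.symm.continuous.continuousOn hmaps) (hi.comp e.symm.injective.injOn hmaps)

theorem betti_conicalCompl_image_of_add_le (hE : ∀ q ≤ N, betti q (conicalCompl (∅ : Set E)) = 0)
    (hX : IsCompact X) (hφ : ContinuousOn φ X) (hi : InjOn φ X)
    (hq : q + Module.finrank ℝ V ≤ N) : betti q (conicalCompl (φ '' X)) = 0 := by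
  let e : V ≃L[ℝ] (Fin (Module.finrank ℝ V) → ℝ) := .ofFinrankEq (by simp)
  rw [← e.symm_image_image X, image_image]
  have hmaps : MapsTo e.symm (e '' X) X := mapsTo_iff_image_subset.2 (e.symm_image_image X).subset
  exact betti_conicalCompl_image_of_add_le_pi hE (hX.image e.continuous)
    (hφ.comp e.symm.continuous.continuousOn hmaps) (hi.comp e.symm.injective.injOn hmaps) hq

end Cells

section Hemisphere

variable {V : Type*} [NormedAddCommGroup V] {σ : ℝ} {y : V}

/-- The chart of the hemisphere `0 ≤ σ * x.fst` of the unit sphere of `ℝ × V` by the unit ball of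
`V`, for a sign `σ = ±1`. -/
noncomputable def hemisphereChart (σ : ℝ) (y : V) : WithLp 2 (ℝ × V) :=
  WithLp.toLp 2 (σ * √(1 - ‖y‖ ^ 2), y)

lemma hemisphereChart_fst (σ : ℝ) (y : V) :
    (hemisphereChart σ y).fst = σ * √(1 - ‖y‖ ^ 2) := rfl

lemma hemisphereChart_snd (σ : ℝ) (y : V) : (hemisphereChart σ y).snd = y := rfl

lemma continuous_hemisphereChart (σ : ℝ) :
    Continuous (hemisphereChart σ : V → WithLp 2 (ℝ × V)) :=
  (WithLp.prod_continuous_toLp 2 ℝ V).comp (by fun_prop)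

lemma injective_hemisphereChart (σ : ℝ) :
    Function.Injective (hemisphereChart σ : V → WithLp 2 (ℝ × V)) :=
  fun _ _ h ↦ congrArg WithLp.snd h

lemma norm_sq_hemisphereChart (hσ : σ ^ 2 = 1) (hy : ‖y‖ ≤ 1) : ‖hemisphereChart σ y‖ ^ 2 = 1 := by
  have hy' : 0 ≤ 1 - ‖y‖ ^ 2 := by nlinarith [norm_nonneg y]
  rw [WithLp.prod_norm_sq_eq_of_L2, hemisphereChart_fst, hemisphereChart_snd, Real.norm_eq_abs,
    sq_abs, mul_pow, hσ, Real.sq_sqrt hy']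
  ring

lemma hemisphereChart_apply_snd {x : WithLp 2 (ℝ × V)} (hσ : σ ^ 2 = 1) (hx : ‖x‖ = 1)
    (h : 0 ≤ σ * x.fst) : hemisphereChart σ x.snd = x := by
  have hnorm := WithLp.prod_norm_sq_eq_of_L2 x
  rw [hx, Real.norm_eq_abs, sq_abs] at hnorm
  have hsqrt : √(1 - ‖x.snd‖ ^ 2) = σ * x.fst := by
    rw [Real.sqrt_eq_iff_mul_self_eq (by nlinarith [sq_nonneg x.fst]) h]
    linear_combination hnorm - x.fst ^ 2 * hσ
  rw [hemisphereChart, hsqrt, ← mul_assoc, ← sq, hσ, one_mul]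
  rfl

lemma hemisphereChart_image_closedBall (hσ : σ ^ 2 = 1) :
    hemisphereChart σ '' closedBall (0 : V) 1 = sphere 0 1 ∩ {x | 0 ≤ σ * x.fst} := by
  ext x
  simp only [mem_image, mem_closedBall_zero_iff, mem_inter_iff, mem_sphere_zero_iff_norm,
    mem_ofPred_eq]
  refine ⟨?_, fun ⟨hx, h⟩ ↦ ⟨x.snd, ?_, hemisphereChart_apply_snd hσ hx h⟩⟩
  · rintro ⟨y, hy, rfl⟩
    refine ⟨(pow_eq_one_iff_of_nonneg (norm_nonneg _) two_ne_zero).1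
      (norm_sq_hemisphereChart hσ hy), ?_⟩
    rw [hemisphereChart_fst, ← mul_assoc, ← sq, hσ, one_mul]
    positivity
  · have := WithLp.prod_norm_sq_eq_of_L2 x
    nlinarith [norm_nonneg x.snd, sq_nonneg ‖x.fst‖]

lemma hemisphereChart_one_image_sphere :
    hemisphereChart 1 '' sphere (0 : V) 1 = sphere 0 1 ∩ {x | x.fst = 0} := by
  ext x
  simp only [mem_image, mem_inter_iff, mem_sphere_zero_iff_norm, mem_ofPred_eq]
  refine ⟨?_, fun ⟨hx, h⟩ ↦ ⟨x.snd, ?_, hemisphereChart_apply_snd (one_pow 2) hx (by simp [h])⟩⟩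
  · rintro ⟨y, hy, rfl⟩
    exact ⟨(pow_eq_one_iff_of_nonneg (norm_nonneg _) two_ne_zero).1
      (norm_sq_hemisphereChart (one_pow 2) hy.le), by simp [hemisphereChart_fst, hy]⟩
  · have := WithLp.prod_norm_sq_eq_of_L2 x
    rw [h, hx, norm_zero] at this
    nlinarith [norm_nonneg x.snd]

end Hemisphere

section Sphere

variable {E V : Type*} [NormedAddCommGroup E] [NormedSpace ℝ E] [NormedAddCommGroup V]
  [NormedSpace ℝ V] [FiniteDimensional ℝ V]

lemma isCompact_hemisphere {σ : ℝ} (hσ : σ ^ 2 = 1) :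
    IsCompact (sphere (0 : WithLp 2 (ℝ × V)) 1 ∩ {x | 0 ≤ σ * x.fst}) := by
  rw [← hemisphereChart_image_closedBall hσ]
  exact (isCompact_closedBall 0 1).image (continuous_hemisphereChart σ)

lemma betti_conicalCompl_image_hemisphere {φ : WithLp 2 (ℝ × V) → E} {σ : ℝ} (hσ : σ ^ 2 = 1)
    (hφ : ContinuousOn φ (sphere 0 1)) (hi : InjOn φ (sphere 0 1)) (q : ℕ) :
    betti q (conicalCompl (φ '' (sphere 0 1 ∩ {x | 0 ≤ σ * x.fst}))) = 0 := by
  rw [← hemisphereChart_image_closedBall hσ, ← image_comp]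
  have hmaps : MapsTo (hemisphereChart σ) (closedBall (0 : V) 1) (sphere 0 1) :=
    mapsTo_iff_image_subset.2
      ((hemisphereChart_image_closedBall hσ).trans_subset inter_subset_left)
  exact betti_conicalCompl_image_of_convex (isCompact_closedBall 0 1) (convex_closedBall 0 1)
    (nonempty_closedBall.2 zero_le_one)
    (hφ.comp (continuous_hemisphereChart σ).continuousOn hmaps)
    (hi.comp (injective_hemisphereChart σ).injOn hmaps)

lemma betti_conicalCompl_image_sphere_prod {φ : WithLp 2 (ℝ × V) → E}
    (hφ : ContinuousOn φ (sphere 0 1)) (hi : InjOn φ (sphere 0 1)) (q : ℕ) :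
    betti q (conicalCompl (φ '' sphere 0 1)) =
      betti (q + 1) (conicalCompl ((φ ∘ hemisphereChart 1) '' sphere (0 : V) 1)) := by
  let H (σ : ℝ) : Set (WithLp 2 (ℝ × V)) := sphere 0 1 ∩ {x | 0 ≤ σ * x.fst}
  have hunion : H 1 ∪ H (-1) = sphere 0 1 := by
    rw [← inter_union_distrib_left, inter_eq_left]
    intro x _
    simpa using le_total 0 x.fst
  have hinter : H 1 ∩ H (-1) = hemisphereChart 1 '' sphere (0 : V) 1 := by
    rw [hemisphereChart_one_image_sphere, ← inter_inter_distrib_left]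
    congr 1
    ext x
    simp [le_antisymm_iff, and_comm]
  have h₁ : (1 : ℝ) ^ 2 = 1 := one_pow 2
  have h₂ : (-1 : ℝ) ^ 2 = 1 := by norm_num
  have hopen {σ : ℝ} (hσ : σ ^ 2 = 1) : IsOpen (conicalCompl (φ '' H σ)) :=
    isOpen_conicalCompl
      ((isCompact_hemisphere hσ).image_of_continuousOn (hφ.mono inter_subset_left))
  have hzero {σ : ℝ} (hσ : σ ^ 2 = 1) (r : ℕ) := betti_conicalCompl_image_hemisphere hσ hφ hi r
  rw [← hunion, image_union, conicalCompl_union, betti_inter_eq_betti_union (hopen h₁) (hopen h₂)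
    (hzero h₁ _) (hzero h₂ _) (hzero h₁ _) (hzero h₂ _), ← conicalCompl_inter,
    ← hi.image_inter inter_subset_left inter_subset_left, hinter, image_comp]

theorem betti_conicalCompl_image_sphere {D : ℕ} {φ : EuclideanSpace ℝ (Fin D) → E}
    (hφ : ContinuousOn φ (sphere 0 1)) (hi : InjOn φ (sphere 0 1)) (q : ℕ) :
    betti q (conicalCompl (φ '' sphere 0 1)) = betti (q + D) (conicalCompl (∅ : Set E)) := by
  induction D generalizing q with
  | zero => simp [sphere_eq_empty_of_subsingleton]
  | succ D ih =>
    have hfinrank : Module.finrank ℝ (WithLp 2 (ℝ × EuclideanSpace ℝ (Fin D))) = D + 1 := by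
      rw [(WithLp.linearEquiv 2 ℝ _).finrank_eq]
      simp [add_comm]
    let e := ((stdOrthonormalBasis ℝ (WithLp 2 (ℝ × EuclideanSpace ℝ (Fin D)))).reindex
      (finCongr hfinrank)).repr
    have hsphere : e '' sphere 0 1 = sphere 0 1 := by rw [e.image_sphere, map_zero e]
    have hmaps : MapsTo e (sphere 0 1) (sphere 0 1) := mapsTo_iff_image_subset.2 hsphere.subset
    have hmaps' : MapsTo (hemisphereChart 1) (sphere (0 : EuclideanSpace ℝ (Fin D)) 1)
        (sphere 0 1) :=
      mapsTo_iff_image_subset.2 (hemisphereChart_one_image_sphere.trans_subset inter_subset_left)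
    rw [← hsphere, ← image_comp, betti_conicalCompl_image_sphere_prod
      (hφ.comp e.continuous.continuousOn hmaps) (hi.comp e.injective.injOn hmaps), ih
      ((hφ.comp e.continuous.continuousOn hmaps).comp
        (continuous_hemisphereChart 1).continuousOn hmaps')
      ((hi.comp e.injective.injOn hmaps).comp (injective_hemisphereChart 1).injOn hmaps')]
    congr 1
    ring

end Sphere

section RoundSphere

variable {E : Type*} [NormedAddCommGroup E] [NormedSpace ℝ E]

lemma conicalCompl_sphere :
    conicalCompl (sphere (0 : E) 1) = {p | ‖p.1‖ < p.2} ∪ {p | p.2 < ‖p.1‖} := by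
  ext p
  simp only [mem_conicalCompl, mem_union, mem_ofPred_eq, mem_sphere_zero_iff_norm,
    ← ne_iff_lt_or_gt]
  refine ⟨fun ⟨h₀, h⟩ hp ↦ ?_, fun h ↦ ⟨?_, fun hp hp' ↦ h ?_⟩⟩
  · rcases (hp ▸ norm_nonneg p.1 : 0 ≤ p.2).eq_or_lt with hp₀ | hp₀
    · exact h₀ (Prod.ext (norm_eq_zero.1 (hp.trans hp₀.symm)) hp₀.symm)
    · exact h hp₀ (by
        rw [norm_smul, norm_inv, Real.norm_of_nonneg hp₀.le, hp, inv_mul_cancel₀ hp₀.ne'])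
  · rintro rfl
    simp at h
  · rwa [norm_smul, norm_inv, Real.norm_of_nonneg hp.le, inv_mul_eq_one₀ hp.ne', eq_comm] at hp'

lemma starConvex_setOf_norm_fst_lt_snd : StarConvex ℝ ((0, 1) : E × ℝ) {p | ‖p.1‖ < p.2} := by
  simpa using
    (convexOn_univ_norm (E := E)).convex_strict_epigraph.starConvex (x := (0, 1)) (by simp)

lemma starConvex_setOf_snd_lt_norm_fst : StarConvex ℝ ((0, -1) : E × ℝ) {p | p.2 < ‖p.1‖} := by
  intro p hp a b ha hb hab
  have hp' : p.2 < ‖p.1‖ := hp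
  simp only [mem_ofPred_eq, Prod.fst_add, Prod.smul_fst, smul_zero, zero_add, Prod.snd_add,
    Prod.smul_snd, norm_smul, Real.norm_of_nonneg hb, smul_eq_mul, mul_neg, mul_one]
  rcases hb.eq_or_lt with rfl | hb
  · linarith
  · nlinarith

theorem betti_conicalCompl_sphere (q : ℕ) :
    betti q (conicalCompl (sphere (0 : E) 1)) = if q = 1 then 1 else 0 := by
  let W : Bool → Set (E × ℝ) := fun b ↦ cond b {p | ‖p.1‖ < p.2} {p | p.2 < ‖p.1‖}
  have hW : conicalCompl (sphere (0 : E) 1) = ⋃ b, W b := by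
    rw [conicalCompl_sphere, union_eq_iUnion]
  have hopen : ∀ b, IsOpen (W b) := Bool.forall_bool.2
    ⟨isOpen_lt continuous_snd continuous_fst.norm, isOpen_lt continuous_fst.norm continuous_snd⟩
  have hdisj : Disjoint (W true) (W false) :=
    Set.disjoint_left.2 fun p (h : ‖p.1‖ < p.2) h' ↦ lt_asymm h h'
  have hstar : ∀ b, ∃ v ∈ W b, StarConvex ℝ v (W b) := Bool.forall_bool.2
    ⟨⟨(0, -1), by simp [W], starConvex_setOf_snd_lt_norm_fst⟩,
      ⟨(0, 1), by simp [W], starConvex_setOf_norm_fst_lt_snd⟩⟩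
  choose v hv hstar using hstar
  match q with
  | 0 => exact betti_zero_of_nonempty ⟨_, zero_neg_one_mem_conicalCompl _⟩
  | 1 =>
    have := betti_one_iUnion_add_one hopen
      (fun b ↦ ((hstar b).isPathConnected (hv b)).isConnected.isPreconnected)
      (fun b ↦ ⟨v b, hv b⟩) (pairwise_disjoint_on_bool.2 hdisj)
    rw [← hW, Fintype.card_bool] at this
    rw [if_pos rfl]
    exact ENat.add_left_injective_of_ne_top ENat.one_ne_top this
  | q + 2 =>
    rw [hW, ← union_eq_iUnion, if_neg (by lia), ← nonpos_iff_eq_zero]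
    refine (betti_union_le_betti_inter (hopen true) (hopen false)
      (betti_eq_zero_of_starConvex _ (hv true) (hstar true))
      (betti_eq_zero_of_starConvex _ (hv false) (hstar false))).trans ?_
    rw [hdisj.inter_eq, betti_succ_empty]

end RoundSphere

section HomologicalCodim

variable {E : Type*} [NormedAddCommGroup E] [NormedSpace ℝ E] {k : ℕ} {K : Set E}

/-- The complement of `K` in the one-point compactification of `E` has the rational homology of
a sphere of dimension `k - 1`; by Alexander duality this says that a compact `K` has the homology
of a sphere of codimension `k` in `E`. The degree of `betti` counts vertices, so that the
fundamental class sits in degree `k`. -/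
def HasHomologicalCodim (k : ℕ) (K : Set E) : Prop :=
  ∀ q, betti q (conicalCompl K) = if q = k then 1 else 0

lemma HasHomologicalCodim.betti_self (h : HasHomologicalCodim k K) :
    betti k (conicalCompl K) = 1 := by
  rw [h, if_pos rfl]

lemma HasHomologicalCodim.betti_of_ne {q : ℕ} (h : HasHomologicalCodim k K) (hq : q ≠ k) :
    betti q (conicalCompl K) = 0 := by
  rw [h, if_neg hq]

end HomologicalCodim

section EuclideanSpace

variable {E : Type*} [NormedAddCommGroup E] [InnerProductSpace ℝ E] [FiniteDimensional ℝ E]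

lemma betti_conicalCompl_empty_of_le {q : ℕ} (hq : q ≤ Module.finrank ℝ E) :
    betti q (conicalCompl (∅ : Set E)) = 0 := by
  obtain ⟨f, hf⟩ : ∃ f : EuclideanSpace ℝ (Fin q) →ₗ[ℝ] E, Function.Injective f :=
    finrank_le_iff_exists_linearMap.1 (by rwa [finrank_euclideanSpace_fin])
  rw [← zero_add q, ← betti_conicalCompl_image_sphere
    f.continuous_of_finiteDimensional.continuousOn hf.injOn]
  exact betti_zero_of_nonempty ⟨_, zero_neg_one_mem_conicalCompl _⟩

theorem hasHomologicalCodim_empty :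
    HasHomologicalCodim (Module.finrank ℝ E + 1) (∅ : Set E) := by
  intro q
  rcases le_total q (Module.finrank ℝ E) with hq | hq
  · rw [betti_conicalCompl_empty_of_le hq, if_neg (by lia)]
  · obtain ⟨r, rfl⟩ := Nat.exists_eq_add_of_le' hq
    let e := (stdOrthonormalBasis ℝ E).repr.symm
    rw [← betti_conicalCompl_image_sphere e.continuous.continuousOn e.injective.injOn,
      e.image_sphere, map_zero, betti_conicalCompl_sphere]
    exact if_congr (by lia) rfl rfl

end EuclideanSpace

section Spheres

variable {E : Type*} {d k q : ℕ} {A K : Set E}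

lemma exists_continuousOn_injOn_image_eq {X : Type*} [TopologicalSpace X] [TopologicalSpace E]
    [Nonempty E] {s : Set X} (e : s ≃ₜ A) :
    ∃ φ : X → E, ContinuousOn φ s ∧ InjOn φ s ∧ φ '' s = A := by
  classical
  let φ : X → E := Function.extend Subtype.val (fun x ↦ (e x : E)) fun _ ↦ Classical.arbitrary E
  have hφ : s.domRestrict φ = fun x ↦ (e x : E) :=
    Function.extend_comp Subtype.val_injective _ _
  refine ⟨φ, ?_, ?_, ?_⟩
  · rw [continuousOn_iff_continuous_domRestrict, hφ]
    exact continuous_subtype_val.comp e.continuous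
  · rw [injOn_iff_injective, hφ]
    exact Subtype.val_injective.comp e.injective
  · rw [← range_domRestrict, hφ, range_comp' Subtype.val e, e.range_coe, image_univ,
      Subtype.range_coe]

namespace HomeoToSphere

lemma exists_isEmbedding_range_eq [TopologicalSpace E] (hA : HomeoToSphere d A) {a : E}
    (ha : a ∈ A) :
    ∃ ψ : EuclideanSpace ℝ (Fin d) → E, Topology.IsEmbedding ψ ∧ range ψ = A \ {a} := by
  obtain ⟨e⟩ := hA
  have : Fact (Module.finrank ℝ (EuclideanSpace ℝ (Fin (d + 1))) = d + 1) :=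
    ⟨finrank_euclideanSpace_fin⟩
  let s := stereographic' d (e ⟨a, ha⟩)
  have hs : Topology.IsEmbedding s.symm :=
    (s.symm.isOpenEmbedding (stereographic'_target _)).isEmbedding
  refine ⟨Subtype.val ∘ e.symm ∘ s.symm,
    .comp .subtypeVal (e.symm.isEmbedding.comp hs), ?_⟩
  rw [range_comp, range_comp, ← image_univ, ← stereographic'_target (e ⟨a, ha⟩),
    s.symm_image_target_eq_source, stereographic'_source, image_compl_eq e.symm.bijective,
    image_singleton, e.symm_apply_apply, image_compl_eq_range_sdiff_image Subtype.val_injective,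
    Subtype.range_coe, image_singleton]

variable [NormedAddCommGroup E] [InnerProductSpace ℝ E] [FiniteDimensional ℝ E]

theorem hasHomologicalCodim (hA : HomeoToSphere d A) (hk : d + k = Module.finrank ℝ E) :
    HasHomologicalCodim k A := by
  obtain ⟨e⟩ := hA
  obtain ⟨φ, hφ, hi, rfl⟩ := exists_continuousOn_injOn_image_eq e.symm
  intro q
  rw [betti_conicalCompl_image_sphere hφ hi, hasHomologicalCodim_empty]
  exact if_congr (by lia) rfl rfl

theorem betti_conicalCompl_of_ssubset (hA : HomeoToSphere d A) (hK : IsCompact K) (hKA : K ⊂ A)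
    (hq : q + d ≤ Module.finrank ℝ E) : betti q (conicalCompl K) = 0 := by
  obtain ⟨a, ha, haK⟩ := exists_of_ssubset hKA
  obtain ⟨ψ, hψ, hrange⟩ := hA.exists_isEmbedding_range_eq ha
  have himage : ψ '' (ψ ⁻¹' K) = K := by
    rw [image_preimage_eq_inter_range, hrange, inter_eq_left]
    exact subset_sdiff_singleton hKA.subset haK
  rw [← himage]
  refine betti_conicalCompl_image_of_add_le (fun r hr ↦ betti_conicalCompl_empty_of_le hr)
    ?_ hψ.continuous.continuousOn hψ.injective.injOn (by rwa [finrank_euclideanSpace_fin])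
  rwa [hψ.isInducing.isCompact_iff, himage]

end HomeoToSphere

namespace FinUnionOfSpheres

lemma isCompact [TopologicalSpace E] (hA : FinUnionOfSpheres d A) : IsCompact A := by
  obtain ⟨𝒞, rfl, h𝒞⟩ := hA
  exact 𝒞.finite_toSet.isCompact_sUnion fun C hC ↦ (h𝒞 C hC).1

theorem induction [TopologicalSpace E] {P : Set E → Prop} (hA : FinUnionOfSpheres d A)
    (empty : P ∅) (sphere : ∀ A, HomeoToSphere d A → P A)
    (union : ∀ A R, IsCompact A → HomeoToSphere d A → IsCompact R → ¬ A ⊆ R → ¬ R ⊆ A →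
      P R → P (A ∪ R)) : P A := by
  classical
  obtain ⟨𝒞, rfl, h𝒞⟩ := hA
  induction 𝒞 using Finset.induction_on with
  | empty => simpa
  | insert A 𝒞 _ ih =>
    obtain ⟨⟨hAc, hA⟩, h𝒞⟩ := (Finset.forall_mem_insert _ _ _).1 h𝒞
    rw [Finset.coe_insert, sUnion_insert]
    by_cases hAR : A ⊆ ⋃₀ ↑𝒞
    · rw [union_eq_right.2 hAR]
      exact ih h𝒞
    by_cases hRA : ⋃₀ ↑𝒞 ⊆ A
    · rw [union_eq_left.2 hRA]
      exact sphere A hA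
    exact union A _ hAc hA (isCompact ⟨𝒞, rfl, h𝒞⟩) hAR hRA (ih h𝒞)

variable [NormedAddCommGroup E] [InnerProductSpace ℝ E] [FiniteDimensional ℝ E]

theorem betti_conicalCompl_eq_zero (hA : FinUnionOfSpheres d A)
    (hq : q + d < Module.finrank ℝ E) : betti q (conicalCompl A) = 0 := by
  have hsphere : ∀ A : Set E, HomeoToSphere d A → betti q (conicalCompl A) = 0 := fun A hA ↦
    (hA.hasHomologicalCodim (Nat.add_sub_cancel' (by lia))).betti_of_ne (by lia)
  refine hA.induction (betti_conicalCompl_empty_of_le (by lia)) hsphere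
    fun A R hAc hA hR hAR _ hzero ↦ ?_
  have hinter := hA.betti_conicalCompl_of_ssubset (q := q + 1) (hAc.inter hR)
    (inter_ssubset_left_iff.2 hAR) (by lia)
  rw [conicalCompl_union, ← nonpos_iff_eq_zero]
  refine (betti_inter_le (isOpen_conicalCompl hAc) (isOpen_conicalCompl hR)).trans ?_
  rw [← conicalCompl_inter, hsphere A hA, hzero, hinter, add_zero, add_zero]

theorem eq_empty_or_homeoToSphere_or_two_le_betti (hA : FinUnionOfSpheres d A)
    (hq : q + d = Module.finrank ℝ E) :
    A = ∅ ∨ HomeoToSphere d A ∨ 2 ≤ betti q (conicalCompl A) := by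
  have hsphere : ∀ A : Set E, HomeoToSphere d A → betti q (conicalCompl A) = 1 := fun A hA ↦
    (hA.hasHomologicalCodim (by lia)).betti_self
  refine hA.induction (P := fun A ↦ A = ∅ ∨ HomeoToSphere d A ∨ 2 ≤ betti q (conicalCompl A))
    (.inl rfl) (fun A hA ↦ .inr (.inl hA)) fun A R hAc hA hR hAR hRA hcases ↦ .inr (.inr ?_)
  have hinter := hA.betti_conicalCompl_of_ssubset (hAc.inter hR)
    (inter_ssubset_left_iff.2 hAR) hq.le
  have hle : 1 ≤ betti q (conicalCompl R) := by
    rcases hcases with rfl | hR | hR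
    · exact absurd (empty_subset A) hRA
    · exact (hsphere R hR).ge
    · exact one_le_two.trans hR
  calc (2 : ℕ∞) = 1 + 1 := one_add_one_eq_two.symm
    _ ≤ betti q (conicalCompl A) + betti q (conicalCompl R) := add_le_add (hsphere A hA).ge hle
    _ ≤ betti q (conicalCompl (A ∪ R)) := by
      rw [conicalCompl_union]
      exact betti_add_betti_le_betti_inter (isOpen_conicalCompl hAc) (isOpen_conicalCompl hR)
        (by rwa [← conicalCompl_inter])

end FinUnionOfSpheres

end Spheres

section InclusionExclusion

variable {ι : Type*} {F : Finset ι} {j : ι}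

lemma sum_powerset_insert_filter_nonempty {M : Type*} [AddCommMonoid M] [DecidableEq ι]
    (hj : j ∉ F) (g : Finset ι → M) :
    ∑ s ∈ (insert j F).powerset with s.Nonempty, g s =
      g {j} + ∑ s ∈ F.powerset with s.Nonempty, g s +
        ∑ s ∈ F.powerset with s.Nonempty, g (insert j s) := by
  have hsplit : ∀ s : Finset ι, g (insert j s) =
      (if s = ∅ then g {j} else 0) + if s.Nonempty then g (insert j s) else 0 := fun s ↦ by
    rcases s.eq_empty_or_nonempty with rfl | hs
    · simp
    · simp [hs, hs.ne_empty]
  simp only [Finset.sum_filter, Finset.sum_powerset_insert hj, Finset.insert_nonempty, if_true]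
  rw [Finset.sum_congr rfl fun s _ ↦ hsplit s, Finset.sum_add_distrib, Finset.sum_ite_eq',
    if_pos (Finset.empty_mem_powerset F)]
  abel

lemma sum_powerset_singleton_filter_nonempty {M : Type*} [AddCommMonoid M] (g : Finset ι → M) :
    ∑ s ∈ ({j} : Finset ι).powerset with s.Nonempty, g s = g {j} := by
  classical
  have := sum_powerset_insert_filter_nonempty (Finset.notMem_empty j) g
  simpa [Finset.filter_singleton] using this

lemma sum_powerset_filter_nonempty_add_two {f : Finset ι → ℕ∞} (hF : F.Nonempty)
    (hf : ∀ s ⊂ F, s.Nonempty → f s = 1) :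
    ∑ s ∈ F.powerset with s.Nonempty, f s + 2 = 2 ^ F.card + f F := by
  classical
  have hmem : F ∈ {s ∈ F.powerset | s.Nonempty} := by simpa
  have hcard : ({s ∈ F.powerset | s.Nonempty}.erase F).card + 2 = 2 ^ F.card := by
    have hfilter : {s ∈ F.powerset | s.Nonempty} = F.powerset.erase ∅ := by
      simp only [← Finset.filter_ne', Finset.nonempty_iff_ne_empty]
    have hproper := Finset.card_erase_add_one hmem
    have hnonempty := Finset.card_erase_add_one (Finset.empty_mem_powerset F)
    rw [← hfilter, Finset.card_powerset] at hnonempty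
    lia
  have hproper : ∑ s ∈ {s ∈ F.powerset | s.Nonempty}.erase F, f s =
      ({s ∈ F.powerset | s.Nonempty}.erase F).card := by
    rw [Finset.sum_congr rfl fun s hs ↦ ?_, Finset.sum_const, nsmul_one]
    simp only [Finset.mem_erase, Finset.mem_filter, Finset.mem_powerset] at hs
    exact hf s (hs.2.1.ssubset_of_ne hs.1) hs.2.2
  rw [← Finset.sum_erase_add _ _ hmem, hproper, add_right_comm]
  exact_mod_cast congrArg (fun k : ℕ ↦ (k : ℕ∞) + f F) hcard

lemma biInter_inter_eq_biInter_insert {α : Type*} [DecidableEq ι] (A : ι → Set α) (j : ι)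
    {s : Finset ι} (hs : s.Nonempty) : ⋂ i ∈ s, A j ∩ A i = ⋂ i ∈ insert j s, A i := by
  rw [Finset.set_biInter_insert]
  exact inter_biInter (s := (s : Set ι)) hs A (A j)

lemma insert_ssubset_insert_of_notMem [DecidableEq ι] {s : Finset ι} (hs : s ⊂ F) (hj : j ∉ F) :
    insert j s ⊂ insert j F := by
  refine (Finset.insert_subset_insert j hs.subset).ssubset_of_ne fun h ↦ hs.ne ?_
  rw [← Finset.erase_insert hj, ← h, Finset.erase_insert fun h ↦ hj (hs.subset h)]

variable {E : Type*} [NormedAddCommGroup E] [NormedSpace ℝ E] {A : ι → Set E}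

lemma sum_betti_conicalCompl_biInter_inter [DecidableEq ι] (A : ι → Set E) (hj : j ∉ F) (q : ℕ) :
    ∑ s ∈ F.powerset with s.Nonempty,
        betti (q + 1 + s.card) (conicalCompl (⋂ i ∈ s, A j ∩ A i)) =
      ∑ s ∈ F.powerset with s.Nonempty,
        betti (q + (insert j s).card) (conicalCompl (⋂ i ∈ insert j s, A i)) := by
  refine Finset.sum_congr rfl fun s hs ↦ ?_
  obtain ⟨hsF, hne⟩ := Finset.mem_filter.1 hs
  rw [biInter_inter_eq_biInter_insert A j hne, Finset.card_insert_of_notMem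
    fun h ↦ hj (Finset.mem_powerset.1 hsF h), add_right_comm, add_assoc]

theorem betti_conicalCompl_biUnion_le (hF : F.Nonempty) (hA : ∀ i, IsCompact (A i)) (q : ℕ) :
    betti (q + 1) (conicalCompl (⋃ i ∈ F, A i)) ≤
      ∑ s ∈ F.powerset with s.Nonempty, betti (q + s.card) (conicalCompl (⋂ i ∈ s, A i)) := by
  classical
  induction hF using Finset.Nonempty.cons_induction generalizing A q with
  | singleton j => simp [sum_powerset_singleton_filter_nonempty]
  | cons j F hj _ ih =>
    rw [Finset.cons_eq_insert, Finset.set_biUnion_insert, conicalCompl_union,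
      sum_powerset_insert_filter_nonempty hj]
    refine (betti_inter_le (isOpen_conicalCompl (hA j))
      (isOpen_conicalCompl (F.isCompact_biUnion fun i _ ↦ hA i))).trans ?_
    rw [← conicalCompl_inter, inter_iUnion₂]
    gcongr ?_ + ?_ + ?_
    · simp
    · exact ih hA q
    · exact (ih (fun i ↦ (hA j).inter (hA i)) (q + 1)).trans_eq
        (sum_betti_conicalCompl_biInter_inter A hj q)

lemma betti_conicalCompl_biUnion_eq_zero (hF : F.Nonempty) (hA : ∀ i, IsCompact (A i)) {q : ℕ}
    (h : ∀ s ⊆ F, s.Nonempty → betti (q + s.card) (conicalCompl (⋂ i ∈ s, A i)) = 0) :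
    betti (q + 1) (conicalCompl (⋃ i ∈ F, A i)) = 0 := by
  rw [← nonpos_iff_eq_zero]
  refine (betti_conicalCompl_biUnion_le hF hA q).trans_eq (Finset.sum_eq_zero fun s hs ↦ ?_)
  rw [Finset.mem_filter, Finset.mem_powerset] at hs
  exact h s hs.1 hs.2

lemma le_betti_conicalCompl_union_biUnion (hF : F.Nonempty) (hA : ∀ i, IsCompact (A i)) {q : ℕ}
    (habove : betti (q + 2) (conicalCompl (A j)) = 0)
    (habove' : ∀ s ⊆ F, s.Nonempty → betti (q + s.card + 1) (conicalCompl (⋂ i ∈ s, A i)) = 0)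
    (hbelow : ∀ s ⊆ F, s.Nonempty →
      betti (q + s.card) (conicalCompl (⋂ i ∈ s, A j ∩ A i)) = 0) :
    betti (q + 1) (conicalCompl (A j)) + betti (q + 1) (conicalCompl (⋃ i ∈ F, A i)) +
        betti (q + 2) (conicalCompl (⋃ i ∈ F, A j ∩ A i)) ≤
      betti (q + 1) (conicalCompl (A j ∪ ⋃ i ∈ F, A i)) := by
  have hU := F.isCompact_biUnion fun i _ ↦ hA i
  rw [← inter_iUnion₂, conicalCompl_union, conicalCompl_inter]
  refine betti_add_betti_add_betti_union_le (isOpen_conicalCompl (hA j)) (isOpen_conicalCompl hU)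
    habove (betti_conicalCompl_biUnion_eq_zero hF hA fun s hs hne ↦ ?_) ?_
  · rw [add_right_comm, habove' s hs hne]
  · rw [← conicalCompl_inter, inter_iUnion₂]
    exact betti_conicalCompl_biUnion_eq_zero hF (fun i ↦ (hA j).inter (hA i)) hbelow

theorem le_betti_conicalCompl_biUnion (hF : F.Nonempty) (hA : ∀ i, IsCompact (A i)) {q : ℕ}
    (habove : ∀ s ⊂ F, s.Nonempty → betti (q + s.card + 1) (conicalCompl (⋂ i ∈ s, A i)) = 0)
    (hbelow : ∀ s ⊆ F, 2 ≤ s.card → ∀ r, r + 1 = q + s.card →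
      betti r (conicalCompl (⋂ i ∈ s, A i)) = 0) :
    ∑ s ∈ F.powerset with s.Nonempty, betti (q + s.card) (conicalCompl (⋂ i ∈ s, A i)) ≤
      betti (q + 1) (conicalCompl (⋃ i ∈ F, A i)) := by
  classical
  induction hF using Finset.Nonempty.cons_induction generalizing A q with
  | singleton j => simp [sum_powerset_singleton_filter_nonempty]
  | cons j F hj hF ih =>
    rw [Finset.cons_eq_insert] at *
    have hcard : ∀ s ⊆ F, (insert j s).card = s.card + 1 := fun s hs ↦
      Finset.card_insert_of_notMem fun h ↦ hj (hs h)
    have hssub : ∀ s ⊆ F, s ⊂ insert j F := fun s hs ↦ hs.trans_ssubset (Finset.ssubset_insert hj)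
    have habove_insert : ∀ s ⊂ F,
        betti (q + 1 + s.card + 1) (conicalCompl (⋂ i ∈ insert j s, A i)) = 0 := fun s hs ↦ by
      convert habove _ (insert_ssubset_insert_of_notMem hs hj) (Finset.insert_nonempty j s) using 2
      rw [hcard s hs.subset]
      ring
    have hbelow_insert : ∀ s ⊆ F, s.Nonempty → ∀ r, r = q + s.card →
        betti r (conicalCompl (⋂ i ∈ s, A j ∩ A i)) = 0 := fun s hs hne r hr ↦ by
      rw [biInter_inter_eq_biInter_insert A j hne]
      have := hne.card_pos
      have := hcard s hs
      exact hbelow _ (Finset.insert_subset_insert j hs) (by lia) r (by lia)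
    have hinter := ih (A := fun i ↦ A j ∩ A i) (q := q + 1) (fun i ↦ (hA j).inter (hA i))
      (fun s hs hne ↦ by rw [biInter_inter_eq_biInter_insert A j hne, habove_insert s hs])
      (fun s hs hs₂ r hr ↦ hbelow_insert s hs (Finset.card_pos.1 (by lia)) r (by lia))
    rw [Finset.set_biUnion_insert, sum_powerset_insert_filter_nonempty hj]
    refine le_trans ?_ (le_betti_conicalCompl_union_biUnion hF hA
      (by simpa using habove_insert ∅ hF.empty_ssubset) (fun s hs ↦ habove s (hssub s hs))
      fun s hs hne ↦ hbelow_insert s hs hne _ rfl)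
    gcongr ?_ + ?_ + ?_
    · simp
    · exact ih hA (fun s hs ↦ habove s (hssub s hs.subset))
        (fun s hs ↦ hbelow s (hssub s hs).subset)
    · exact (sum_betti_conicalCompl_biInter_inter A hj q).symm.trans_le hinter

end InclusionExclusion

section BettiOne

variable {E : Type*} [NormedAddCommGroup E] [NormedSpace ℝ E] {A K : Set E}

lemma disjoint_openCone {B : Set E} (h : Disjoint A B) : Disjoint (openCone A) (openCone B) :=
  disjoint_left.2 fun _ hA hB ↦ disjoint_left.1 h hA.2 hB.2

lemma disjoint_openCone_conicalCompl (h : A ⊆ K) : Disjoint (openCone A) (conicalCompl K) :=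
  disjoint_left.2 fun _ hA hK ↦ hK.2 ⟨hA.1, h hA.2⟩

lemma mk_one_mem_openCone {x : E} (hx : x ∈ A) : (x, (1 : ℝ)) ∈ openCone A :=
  ⟨one_pos, by simpa using hx⟩

lemma isPreconnected_openCone (hA : IsPreconnected A) : IsPreconnected (openCone A) := by
  suffices openCone A = (fun z : E × ℝ ↦ (z.2 • z.1, z.2)) '' A ×ˢ Ioi 0 by
    rw [this]
    exact (hA.prod isPreconnected_Ioi).image _ (by fun_prop)
  refine Subset.antisymm (fun p hp ↦ ⟨(p.2⁻¹ • p.1, p.2), ⟨hp.2, hp.1⟩, ?_⟩) ?_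
  · simp [smul_inv_smul₀ hp.1.ne']
  · rintro _ ⟨z, ⟨hzA, hz⟩, rfl⟩
    exact ⟨hz, by rwa [inv_smul_smul₀ (mem_Ioi.1 hz).ne']⟩

lemma isPreconnected_setOf_mul_lt_norm {R : ℝ} (hR : 0 < R) :
    IsPreconnected {p : E × ℝ | R * p.2 < ‖p.1‖} := by
  have hstar : StarConvex ℝ ((0, -1) : E × ℝ) {p | R * p.2 < ‖p.1‖} := by
    intro p hp a b ha hb hab
    have hRa : 0 ≤ R * a := by positivity
    simp only [mem_ofPred_eq, Prod.fst_add, Prod.smul_fst, smul_zero, zero_add, Prod.snd_add,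
      Prod.smul_snd, norm_smul, Real.norm_of_nonneg hb, smul_eq_mul, mul_neg, mul_one] at hp ⊢
    rcases hb.eq_or_lt with rfl | hb
    · simp_all
    · linarith [mul_lt_mul_of_pos_left hp hb]
  exact (hstar.isPathConnected (by simp [hR])).isConnected.isPreconnected

lemma isPreconnected_conicalCompl [Nontrivial E] (hA : IsPreconnected A) (hb : IsBounded Aᶜ) :
    IsPreconnected (conicalCompl Aᶜ) := by
  obtain ⟨R, hR, hAR⟩ := hb.subset_closedBall_lt 0 0
  obtain ⟨y, hy⟩ := NormedSpace.exists_lt_norm ℝ E R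
  have hyA : y ∈ A := by
    by_contra h
    exact hy.not_ge (mem_closedBall_zero_iff.1 (hAR h))
  rw [conicalCompl_eq_union hR hAR, compl_compl]
  exact (isPreconnected_setOf_mul_lt_norm hR).union (y, 1) (by simpa using hy)
    (mk_one_mem_openCone hyA) (isPreconnected_openCone hA)

lemma iUnion_update_openCone {κ : Type*} [DecidableEq κ] {U : κ → Set E} (hK : ⋃ i, U i = Kᶜ)
    (i₀ : κ) :
    ⋃ i, Function.update (openCone ∘ U) i₀ (conicalCompl (U i₀)ᶜ) i = conicalCompl K := by
  ext p
  simp only [mem_iUnion, mem_conicalCompl, ← mem_compl_iff, ← hK]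
  rcases lt_or_ge 0 p.2 with hp | hp
  · have h₀ : p ≠ 0 := fun h ↦ hp.ne' (congrArg Prod.snd h)
    have hmem : ∀ i, p ∈ Function.update (openCone ∘ U) i₀ (conicalCompl (U i₀)ᶜ) i ↔
        p.2⁻¹ • p.1 ∈ U i :=
      (Function.forall_update_iff _ fun i W ↦ p ∈ W ↔ p.2⁻¹ • p.1 ∈ U i).2
        ⟨by simp [mem_conicalCompl, h₀, hp], fun i _ ↦ by simp [openCone, hp]⟩
    simp [hmem, h₀, hp]
  · have hmem : ∀ i, p ∈ Function.update (openCone ∘ U) i₀ (conicalCompl (U i₀)ᶜ) i ↔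
        i = i₀ ∧ p ≠ 0 :=
      (Function.forall_update_iff _ fun i W ↦ p ∈ W ↔ i = i₀ ∧ p ≠ 0).2
        ⟨by simp [mem_conicalCompl, hp.not_gt], fun i hi ↦ by simp [openCone, hp.not_gt, hi]⟩
    simp [hmem, hp.not_gt]

open scoped Function

lemma pairwise_disjoint_update_openCone {κ : Type*} [DecidableEq κ] {U : κ → Set E}
    (hd : Pairwise (Disjoint on U)) (i₀ : κ) :
    Pairwise (Disjoint on Function.update (openCone ∘ U) i₀ (conicalCompl (U i₀)ᶜ)) := by
  have hdisj : ∀ i, i ≠ i₀ → Disjoint (openCone (U i)) (conicalCompl (U i₀)ᶜ) := fun i hi ↦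
    disjoint_openCone_conicalCompl (hd hi).subset_compl_right
  intro i j hij
  rcases eq_or_ne i i₀ with rfl | hi
  · simpa [Function.onFun, hij.symm] using (hdisj j hij.symm).symm
  rcases eq_or_ne j i₀ with rfl | hj
  · simpa [Function.onFun, hij] using hdisj i hij
  · simpa [Function.onFun, hi, hj] using disjoint_openCone (hd hij)

theorem betti_one_conicalCompl_add_one [ProperSpace E] [Nontrivial E] {κ : Type*} [Fintype κ]
    {U : κ → Set E} (ho : ∀ i, IsOpen (U i)) (hU : ∀ i, IsConnected (U i))
    (hd : Pairwise (Disjoint on U)) (hK : ⋃ i, U i = Kᶜ) {i₀ : κ} (hb : IsBounded (U i₀)ᶜ) :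
    betti 1 (conicalCompl K) + 1 = Fintype.card κ := by
  classical
  have : Nonempty κ := ⟨i₀⟩
  rw [← iUnion_update_openCone hK i₀]
  refine betti_one_iUnion_add_one
    ((Function.forall_update_iff _ fun _ ↦ IsOpen).2 ⟨?_, fun i _ ↦ isOpen_openCone (ho i)⟩)
    ((Function.forall_update_iff _ fun _ ↦ IsPreconnected).2
      ⟨isPreconnected_conicalCompl (hU i₀).isPreconnected hb,
        fun i _ ↦ isPreconnected_openCone (hU i).isPreconnected⟩)
    ((Function.forall_update_iff _ fun _ ↦ Set.Nonempty).2
      ⟨⟨_, zero_neg_one_mem_conicalCompl _⟩, fun i _ ↦ (hU i).nonempty.elim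
        fun x hx ↦ ⟨(x, 1), mk_one_mem_openCone hx⟩⟩)
    (pairwise_disjoint_update_openCone hd i₀)
  exact isOpen_conicalCompl (isCompact_of_isClosed_isBounded (ho i₀).isClosed_compl hb)

end BettiOne

section SurfSide

lemma iUnion_surfSide {E : Type*} [MetricSpace E] (K : Set E) : ⋃ e, surfSide K e = Kᶜ := by
  ext x
  simp only [mem_iUnion, Fin.exists_fin_two, surfSide, if_true, one_ne_zero, if_false,
    mem_ofPred_eq, ← and_or_left, em, and_true, mem_compl_iff]

open scoped Function in
lemma pairwise_disjoint_surfSide {E : Type*} [MetricSpace E] (K : Set E) :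
    Pairwise (Disjoint on surfSide K) := by
  have h : Disjoint (surfSide K 0) (surfSide K 1) := by
    simp only [surfSide, if_true, one_ne_zero, if_false]
    exact disjoint_left.2 fun x h₀ h₁ ↦ h₁.2 h₀.2
  intro e e' he
  fin_cases e <;> fin_cases e' <;> first | exact absurd rfl he | exact h | exact h.symm

variable {E : Type*} [NormedAddCommGroup E] [NormedSpace ℝ E] {K : Set E} {x : E}

lemma isOpen_surfSide (hK : IsClosed K) (e : Fin 2) : IsOpen (surfSide K e) := by
  refine isOpen_iff_mem_nhds.2 fun x hx ↦ ?_
  have hxK : x ∈ Kᶜ := iUnion_surfSide K ▸ mem_iUnion_of_mem e hx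
  filter_upwards [hK.isOpen_compl.connectedComponentIn.mem_nhds (mem_connectedComponentIn hxK)]
    with y hy
  have hyK : y ∉ K := connectedComponentIn_subset _ _ hy
  rw [surfSide] at hx ⊢
  split_ifs at hx ⊢ <;> exact ⟨hyK, connectedComponentIn_eq hy ▸ hx.2⟩

lemma mem_surfSide_one_of_forall_smul_notMem (hx : x ≠ 0) (h : ∀ r : ℝ, 1 ≤ r → r • x ∉ K) :
    x ∈ surfSide K 1 := by
  rw [surfSide, if_neg one_ne_zero]
  refine ⟨by simpa using h 1 le_rfl, fun hb ↦ ?_⟩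
  have hray : (fun r : ℝ ↦ r • x) '' Ici 1 ⊆ connectedComponentIn Kᶜ x :=
    (isPreconnected_Ici.image _ (by fun_prop)).subset_connectedComponentIn ⟨1, by simp, by simp⟩
      (image_subset_iff.2 h)
  obtain ⟨M, hM⟩ := (hb.subset hray).exists_norm_le
  have hbound : ∀ r : ℝ, 1 ≤ r → r ≤ M / ‖x‖ := fun r hr ↦ by
    have := hM _ (mem_image_of_mem _ hr)
    rw [le_div_iff₀ (norm_pos_iff.2 hx)]
    rwa [norm_smul, Real.norm_of_nonneg (by linarith)] at this
  have hlt := lt_add_one (max 1 (M / ‖x‖))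
  linarith [hbound _ ((le_max_left 1 (M / ‖x‖)).trans hlt.le), le_max_right 1 (M / ‖x‖)]

lemma compl_closedBall_subset_surfSide_one {R : ℝ} (hR : 0 ≤ R) (hK : K ⊆ closedBall 0 R) :
    (closedBall 0 R)ᶜ ⊆ surfSide K 1 := fun x hx ↦ by
  rw [mem_compl_iff, mem_closedBall_zero_iff, not_le] at hx
  refine mem_surfSide_one_of_forall_smul_notMem (norm_pos_iff.1 (hR.trans_lt hx)) fun r hr hrK ↦ ?_
  have := mem_closedBall_zero_iff.1 (hK hrK)
  rw [norm_smul, Real.norm_of_nonneg (by linarith)] at this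
  linarith [le_mul_of_one_le_left (norm_nonneg x) hr]

lemma isBounded_compl_iInter_surfSide_one {ι : Type*} [Finite ι] {S : ι → Set E}
    (hS : ∀ i, IsCompact (S i)) : IsBounded (⋂ i, surfSide (S i) 1)ᶜ := by
  obtain ⟨R, hR, hSR⟩ := (isCompact_iUnion hS).isBounded.subset_closedBall_lt 0 0
  refine (isBounded_closedBall (x := 0) (r := R)).subset
    (compl_subset_comm.1 (subset_iInter fun i ↦ ?_))
  exact compl_closedBall_subset_surfSide_one hR.le ((subset_iUnion S i).trans hSR)

open scoped Function in
theorem betti_one_conicalCompl_iUnion_add_one [ProperSpace E] [Nontrivial E] {ι : Type*}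
    [Fintype ι] {S : ι → Set E} (hS : ∀ i, IsCompact (S i))
    (hregion : ∀ ε : ι → Fin 2, IsConnected (⋂ i, surfSide (S i) (ε i))) :
    betti 1 (conicalCompl (⋃ i, S i)) + 1 = 2 ^ Fintype.card ι := by
  classical
  have hcells : ⋃ ε : ι → Fin 2, ⋂ i, surfSide (S i) (ε i) = (⋃ i, S i)ᶜ := by
    rw [compl_iUnion]
    simp_rw [← iUnion_surfSide]
    exact iInf_iSup_eq.symm
  have hd : Pairwise (Disjoint on fun ε : ι → Fin 2 ↦ ⋂ i, surfSide (S i) (ε i)) :=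
    fun ε ε' hε ↦ by
      obtain ⟨i, hi⟩ := Function.ne_iff.1 hε
      exact (pairwise_disjoint_surfSide (S i) hi).mono (iInter_subset _ i) (iInter_subset _ i)
  have ho : ∀ ε : ι → Fin 2, IsOpen (⋂ i, surfSide (S i) (ε i)) := fun ε ↦
    isOpen_iInter_of_finite fun i ↦ isOpen_surfSide (hS i).isClosed (ε i)
  have hb : IsBounded (⋂ i, surfSide (S i) 1)ᶜ := isBounded_compl_iInter_surfSide_one hS
  have := betti_one_conicalCompl_add_one ho hregion hd hcells (i₀ := fun _ ↦ 1) hb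
  rw [this, Fintype.card_fun, Fintype.card_fin, Nat.cast_pow, Nat.cast_ofNat]

end SurfSide

section Counting

variable {E : Type*} [NormedAddCommGroup E] [NormedSpace ℝ E] {ι : Type*} {F : Finset ι}
  {A : ι → Set E}

lemma one_le_betti_conicalCompl_biInter (hF : F.Nonempty) (hA : ∀ i, IsCompact (A i))
    (hcodim : ∀ s ⊂ F, s.Nonempty → HasHomologicalCodim s.card (⋂ i ∈ s, A i))
    (hcount : betti 1 (conicalCompl (⋃ i ∈ F, A i)) + 1 = 2 ^ F.card) :
    1 ≤ betti F.card (conicalCompl (⋂ i ∈ F, A i)) := by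
  have hsum := sum_powerset_filter_nonempty_add_two hF fun s hs hne ↦ (hcodim s hs hne).betti_self
  have hle := betti_conicalCompl_biUnion_le hF hA 0
  have hfinite : (2 : ℕ∞) ^ F.card ≠ ⊤ := mod_cast ENat.natCast_ne_top (2 ^ F.card)
  simp only [zero_add] at hle
  refine (ENat.add_le_add_iff_left hfinite).1 ?_
  calc (2 : ℕ∞) ^ F.card + 1 = betti 1 (conicalCompl (⋃ i ∈ F, A i)) + 2 := by
        rw [← hcount, add_assoc, one_add_one_eq_two]
    _ ≤ 2 ^ F.card + betti F.card (conicalCompl (⋂ i ∈ F, A i)) := by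
        rw [← hsum]
        gcongr

lemma betti_conicalCompl_biInter_le_one (hF : F.Nonempty) (hA : ∀ i, IsCompact (A i))
    (hcodim : ∀ s ⊂ F, s.Nonempty → HasHomologicalCodim s.card (⋂ i ∈ s, A i))
    (hzero : ∀ r, r + 1 = F.card → betti r (conicalCompl (⋂ i ∈ F, A i)) = 0)
    (hcount : betti 1 (conicalCompl (⋃ i ∈ F, A i)) + 1 = 2 ^ F.card) :
    betti F.card (conicalCompl (⋂ i ∈ F, A i)) ≤ 1 := by
  have hsum := sum_powerset_filter_nonempty_add_two hF fun s hs hne ↦ (hcodim s hs hne).betti_self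
  have hle := le_betti_conicalCompl_biUnion (q := 0) hF hA
    (fun s hs hne ↦ (hcodim s hs hne).betti_of_ne (by lia)) fun s hs hs₂ r hr ↦ by
      rcases hs.eq_or_ssubset with rfl | hs
      · exact hzero r (by lia)
      · exact (hcodim s hs (Finset.card_pos.1 (by lia))).betti_of_ne (by lia)
  have hfinite : (2 : ℕ∞) ^ F.card ≠ ⊤ := mod_cast ENat.natCast_ne_top (2 ^ F.card)
  simp only [zero_add] at hle
  refine (ENat.add_le_add_iff_left hfinite).1 ?_
  calc 2 ^ F.card + betti F.card (conicalCompl (⋂ i ∈ F, A i)) ≤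
        betti 1 (conicalCompl (⋃ i ∈ F, A i)) + 2 := by
        rw [← hsum]
        gcongr
    _ = 2 ^ F.card + 1 := by rw [← hcount, add_assoc, one_add_one_eq_two]

end Counting

section Venn

variable {E : Type*} [NormedAddCommGroup E] [InnerProductSpace ℝ E] [FiniteDimensional ℝ E]
  {ι : Type*} {t : Finset ι} {m : ℕ} {S : ι → Set E}

lemma betti_one_conicalCompl_biUnion_add_one [Nontrivial E] (hS : ∀ i, IsCompact (S i))
    (hregion : ∀ ε : t → Fin 2, IsConnected (⋂ i : t, surfSide (S i) (ε i))) :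
    betti 1 (conicalCompl (⋃ i ∈ t, S i)) + 1 = 2 ^ t.card := by
  rw [← Fintype.card_coe t, ← betti_one_conicalCompl_iUnion_add_one (fun i : t ↦ hS i) hregion,
    iUnion_subtype]

theorem hasHomologicalCodim_biInter (hE : Module.finrank ℝ E = m) (hm : 0 < m)
    (hS : ∀ i, IsMSurface m (S i))
    (hregion : ∀ (t : Finset ι) (ε : t → Fin 2), IsConnected (⋂ i : t, surfSide (S i) (ε i)))
    (hinter : ∀ t : Finset ι, 2 ≤ t.card → t.card ≤ m →
      FinUnionOfSpheres (m - t.card) (⋂ i ∈ t, S i))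
    (hempty : ∀ t : Finset ι, m < t.card → ⋂ i ∈ t, S i = ∅)
    (ht : t.Nonempty) (htm : t.card ≤ m + 1) : HasHomologicalCodim t.card (⋂ i ∈ t, S i) := by
  have := Module.nontrivial_of_finrank_pos (hm.trans_eq hE.symm)
  induction t using Finset.strongInduction with
  | H t ih =>
    have hcodim : ∀ s ⊂ t, s.Nonempty → HasHomologicalCodim s.card (⋂ i ∈ s, S i) :=
      fun s hs hne ↦ ih s hs hne ((Finset.card_le_card hs.subset).trans htm)
    rcases htm.eq_or_lt with htm | htm
    · rw [hempty t (by lia), htm, ← hE]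
      exact hasHomologicalCodim_empty
    rcases (Nat.one_le_iff_ne_zero.2 ht.card_ne_zero).eq_or_lt with ht₁ | ht₂
    · obtain ⟨i, rfl⟩ := Finset.card_eq_one.1 ht₁.symm
      simpa using (hS i).2.hasHomologicalCodim (k := 1) (by lia)
    have hSt := hinter t ht₂ (by lia)
    have hcount := betti_one_conicalCompl_biUnion_add_one (fun i ↦ (hS i).1) (hregion t)
    have hle := betti_conicalCompl_biInter_le_one ht (fun i ↦ (hS i).1) hcodim
      (fun r hr ↦ hSt.betti_conicalCompl_eq_zero (by lia)) hcount
    have hge := one_le_betti_conicalCompl_biInter ht (fun i ↦ (hS i).1) hcodim hcount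
    rcases hSt.eq_empty_or_homeoToSphere_or_two_le_betti (q := t.card) (by lia) with h | h | h
    · rw [h, betti_conicalCompl_empty_of_le (by lia)] at hge
      exact absurd hge (by simp)
    · exact h.hasHomologicalCodim (by lia)
    · exact absurd (h.trans hle) (by simp)

/-- The intersections of exactly `m` of the surfaces may be nonempty unions of copies of `S^0`. This
is the convention under which the bound is attained, by three circles in the plane for `m = 2`. -/
theorem fullyReducible_card_le_general [Fintype ι] (hE : Module.finrank ℝ E = m) (hm : 0 < m)
    (hS : ∀ i, IsMSurface m (S i))
    (hregion : ∀ (t : Finset ι) (ε : t → Fin 2), IsConnected (⋂ i : t, surfSide (S i) (ε i)))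
    (hinter : ∀ t : Finset ι, 2 ≤ t.card → t.card ≤ m →
      FinUnionOfSpheres (m - t.card) (⋂ i ∈ t, S i))
    (hempty : ∀ t : Finset ι, m < t.card → ⋂ i ∈ t, S i = ∅) :
    Fintype.card ι ≤ m + 1 := by
  have := Module.nontrivial_of_finrank_pos (hm.trans_eq hE.symm)
  by_contra! hcard
  obtain ⟨t, -, ht⟩ := Finset.exists_subset_card_eq (s := (Finset.univ : Finset ι)) hcard
  have hpos : 1 ≤ betti t.card (conicalCompl (⋂ i ∈ t, S i)) :=
    one_le_betti_conicalCompl_biInter (Finset.card_pos.1 (by lia)) (fun i ↦ (hS i).1)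
      (fun s hs hne ↦ hasHomologicalCodim_biInter hE hm hS hregion hinter hempty hne
        (by have := Finset.card_lt_card hs; lia))
      (betti_one_conicalCompl_biUnion_add_one (fun i ↦ (hS i).1) (hregion t))
  rw [hempty t (by lia), hasHomologicalCodim_empty.betti_of_ne (by lia)] at hpos
  exact absurd hpos (by simp)

end Venn

section IsSimpleVennDiagram

variable {E : Type*} [MetricSpace E] {ι : Type*} [Fintype ι] {m : ℕ} {S : ι → Set E}

lemma IsSimpleVennDiagram.biInter_eq_empty (hV : IsSimpleVennDiagram m S) {t : Finset ι}
    (ht : 2 ≤ t.card) (htm : m ≤ t.card) : ⋂ i ∈ t, S i = ∅ := by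
  simpa [htm] using hV.2 t ht

lemma IsSimpleVennDiagram.finUnionOfSpheres_biInter (hV : IsSimpleVennDiagram m S) {t : Finset ι}
    (ht : 2 ≤ t.card) : FinUnionOfSpheres (m - t.card) (⋂ i ∈ t, S i) := by
  rcases le_or_gt m t.card with htm | htm
  · rw [hV.biInter_eq_empty ht htm]
    exact ⟨∅, by simp, by simp⟩
  · simpa [htm.not_ge] using hV.2 t ht

end IsSimpleVennDiagram

/-- **Theorem 4.** If `V = {S₁, …, Sₙ}` is a fully reducible simple `m`-dimensional
`n`-Venn diagram, then `n ≤ m + 1`. -/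
theorem fullyReducible_card_le (m n : ℕ) (hm : 2 ≤ m)
    (S : Fin n → Set (EuclideanSpace ℝ (Fin m)))
    (hV : IsSimpleVennDiagram m S) (hFR : FullyReducible m S) :
    n ≤ m + 1 := by
  rw [← Fintype.card_fin n]
  exact fullyReducible_card_le_general finrank_euclideanSpace_fin (by lia) hV.1.1
    (fun t ε ↦ ((hFR t).2.1 ε).2) (fun t ht _ ↦ hV.finUnionOfSpheres_biInter ht)
    (fun t ht ↦ hV.biInter_eq_empty (by lia) ht.le)
end

section
/- For every integer m ≥ 3, the following determinant identity holds: the determinant of the (m-1)×(m-1) matrix whose rows are indexed by j = 2, 3, ..., m and whose row j is (1, j, j^2, ..., j^{m-3}, j·2^{j-1}) equals 2(m-1) times the determinant of the (m-1)×(m-1) matrix whose row j is (1, j, j^2, ..., j^{m-3}, 2^{j-1}). -/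
open Matrix

/- Write `Δ` for the forward difference operator with step `1`. Replacing each column
`f 0, …, f n` of a matrix by `f 0, Δ f 0, …, Δ^n f 0` does not change the determinant: by Newton's
formula the two matrices differ by a unitriangular matrix of binomial coefficients. As a function
of `r`, the power `(r + a)^c` is killed by `Δ^k` for `k > c` and sent to `c!` by `Δ^c`, so a
Vandermonde matrix on consecutive nodes whose last column is replaced by `f` becomes upper
triangular, with determinant `0! 1! ⋯ (n - 1)! · Δ^n f 0`. It remains to compare the `n`-th
differences at `0` of `(r + a) q^(r + s)` and `q^(r + s)`: their ratio is `a + n q / (q - 1)`. -/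

open Finset Function
open scoped Nat

lemma fwdDiff_iter_comp_nsmul_add {M G : Type*} [AddCommMonoid M] [AddCommGroup G]
    (f : M → G) (h y : M) (k r : ℕ) :
    (fwdDiff 1)^[k] (fun i : ℕ ↦ f (i • h + y)) r = (fwdDiff h)^[k] f (r • h + y) := by
  simp only [fwdDiff_iter_eq_sum_shift, smul_eq_mul, mul_one, add_nsmul, add_right_comm]

section CommRing

variable {R : Type*} [CommRing R]

theorem det_of_choose (n : ℕ) :
    (Matrix.of fun r k : Fin n ↦ ((r : ℕ).choose k : R)).det = 1 := by
  rw [det_of_isLowerTriangular]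
  · simp only [of_apply, Nat.choose_self, Nat.cast_one, prod_const_one]
  · intro r k (hrk : r < k)
    simp only [of_apply, Nat.choose_eq_zero_of_lt hrk, Nat.cast_zero]

lemma sum_choose_mul_fwdDiff_iter {n : ℕ} (f : ℕ → R) (r : Fin n) :
    ∑ k : Fin n, ((r : ℕ).choose k : R) * (fwdDiff 1)^[k] f 0 = f r := by
  rw [Fin.sum_univ_eq_sum_range (fun k ↦ ((r : ℕ).choose k : R) * (fwdDiff 1)^[k] f 0)]
  have newton := shift_eq_sum_fwdDiff_iter 1 f r 0
  simp only [smul_eq_mul, mul_one, zero_add, nsmul_eq_mul] at newton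
  rw [newton]
  refine (sum_subset (range_subset_range.mpr r.isLt) fun k _ hk ↦ ?_).symm
  rw [Nat.choose_eq_zero_of_lt (by simpa using hk), Nat.cast_zero, zero_mul]

theorem det_of_eq_det_fwdDiff_iter {n : ℕ} (f : Fin n → ℕ → R) :
    (Matrix.of fun r c : Fin n ↦ f c r).det =
      (Matrix.of fun k c : Fin n ↦ (fwdDiff 1)^[k] (f c) 0).det := by
  have factorization : (Matrix.of fun r c : Fin n ↦ f c r) =
      (Matrix.of fun r k : Fin n ↦ ((r : ℕ).choose k : R)) *
        Matrix.of fun k c : Fin n ↦ (fwdDiff 1)^[k] (f c) 0 := by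
    ext r c
    simp only [mul_apply, of_apply, sum_choose_mul_fwdDiff_iter]
  rw [factorization, det_mul, det_of_choose, one_mul]

lemma fwdDiff_iter_natCast_add_pow_of_lt (a : R) {c k : ℕ} (h : c < k) (r : ℕ) :
    (fwdDiff 1)^[k] (fun i : ℕ ↦ (i + a) ^ c) r = 0 := by
  simpa [fwdDiff_iter_pow_eq_zero_of_lt h] using
    fwdDiff_iter_comp_nsmul_add (fun x : R ↦ x ^ c) 1 a k r

lemma fwdDiff_iter_natCast_add_pow_self (a : R) (k r : ℕ) :
    (fwdDiff 1)^[k] (fun i : ℕ ↦ (i + a) ^ k) r = k ! := by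
  simpa [fwdDiff_iter_eq_factorial] using
    fwdDiff_iter_comp_nsmul_add (fun x : R ↦ x ^ k) 1 a k r

/-- The Vandermonde matrix on the `n + 1` consecutive nodes `a, a + 1, …, a + n`, with its last
column replaced by the values `f 0, …, f n`. The row of index `r` belongs to the node `r + a`. -/
def vandermondeWithLastCol (n : ℕ) (a : R) (f : ℕ → R) : Matrix (Fin (n + 1)) (Fin (n + 1)) R :=
  Matrix.of fun r c ↦ if (c : ℕ) = n then f r else ((r : ℕ) + a) ^ (c : ℕ)

theorem det_vandermondeWithLastCol (n : ℕ) (a : R) (f : ℕ → R) :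
    (vandermondeWithLastCol n a f).det = (∏ k : Fin n, ((k : ℕ)! : R)) * (fwdDiff 1)^[n] f 0 := by
  let column (c : Fin (n + 1)) : ℕ → R := if (c : ℕ) = n then f else fun i ↦ (i + a) ^ (c : ℕ)
  have columns :
      vandermondeWithLastCol n a f = Matrix.of fun r c : Fin (n + 1) ↦ column c r := by
    ext r c
    simp only [vandermondeWithLastCol, column, of_apply, ite_apply]
  have triangular :
      (Matrix.of fun k c : Fin (n + 1) ↦ (fwdDiff 1)^[k] (column c) 0).IsUpperTriangular := by
    intro k c (hck : c < k)
    have hc : (c : ℕ) ≠ n := by omega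
    simp only [of_apply, column, if_neg hc, fwdDiff_iter_natCast_add_pow_of_lt a hck]
  rw [columns, det_of_eq_det_fwdDiff_iter, det_of_isUpperTriangular triangular,
    Fin.prod_univ_castSucc]
  simp only [of_apply, column, Fin.val_castSucc, Fin.val_last, if_true, if_neg (Fin.is_lt _).ne,
    fwdDiff_iter_natCast_add_pow_self]

lemma fwdDiff_iter_pow_add (q : R) (s n r : ℕ) :
    (fwdDiff 1)^[n] (fun i : ℕ ↦ q ^ (i + s)) r = (q - 1) ^ n * q ^ (r + s) := by
  induction n generalizing r with
  | zero => simp only [iterate_zero, id_eq, pow_zero, one_mul]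
  | succ n ih =>
    rw [iterate_succ_apply', fwdDiff, ih, ih]
    ring

lemma sub_one_mul_fwdDiff_iter_natCast_add_mul_pow_add (a q : R) (s n r : ℕ) :
    (q - 1) * (fwdDiff 1)^[n] (fun i : ℕ ↦ (i + a) * q ^ (i + s)) r =
      ((q - 1) * (r + a) + n * q) * (fwdDiff 1)^[n] (fun i : ℕ ↦ q ^ (i + s)) r := by
  rw [fwdDiff_iter_pow_add]
  induction n generalizing r with
  | zero => simp only [iterate_zero, id_eq, pow_zero, Nat.cast_zero]; ring
  | succ n ih =>
    rw [iterate_succ_apply', fwdDiff, mul_sub, ih, ih]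
    push_cast
    ring

theorem det_identity_general (a q : R) (s n : ℕ) :
    (q - 1) * (vandermondeWithLastCol n a fun r ↦ (r + a) * q ^ (r + s)).det =
      ((q - 1) * a + n * q) * (vandermondeWithLastCol n a fun r ↦ q ^ (r + s)).det := by
  have differences := sub_one_mul_fwdDiff_iter_natCast_add_mul_pow_add a q s n 0
  rw [Nat.cast_zero, zero_add] at differences
  rw [det_vandermondeWithLastCol, det_vandermondeWithLastCol, mul_left_comm, differences,
    mul_left_comm]

end CommRing

/-- **Determinant identity.** For `m ≥ 3`, the determinant of the `(m-1) × (m-1)` matrix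
whose row indexed by `j = 2, …, m` is `(1, j, j², …, j^{m-3}, j·2^{j-1})` equals `2(m-1)`
times the determinant of the matrix whose row `j` is `(1, j, j², …, j^{m-3}, 2^{j-1})`.
Here the row of index `r : Fin (m-1)` corresponds to `j = r + 2`, and the column of index
`c : Fin (m-1)` with `c < m - 2` carries the entry `j^c`, while the last column `c = m - 2`
carries the entries `j·2^{j-1}` resp. `2^{j-1}`. -/
theorem det_identity (m : ℕ) (hm : 3 ≤ m) :
    (Matrix.of fun r c : Fin (m - 1) =>
        if (c : ℕ) = m - 2 then (((r : ℕ) + 2 : ℝ)) * 2 ^ ((r : ℕ) + 1)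
        else (((r : ℕ) + 2 : ℝ)) ^ (c : ℕ)).det
      = 2 * ((m : ℝ) - 1) *
        (Matrix.of fun r c : Fin (m - 1) =>
          if (c : ℕ) = m - 2 then (2 : ℝ) ^ ((r : ℕ) + 1)
          else (((r : ℕ) + 2 : ℝ)) ^ (c : ℕ)).det := by
  obtain ⟨n, rfl⟩ : ∃ n, m = n + 2 := ⟨m - 2, by omega⟩
  change (vandermondeWithLastCol n (2 : ℝ) fun r ↦ (r + 2) * 2 ^ (r + 1)).det =
    2 * (((n + 2 : ℕ) : ℝ) - 1) * (vandermondeWithLastCol n 2 fun r ↦ 2 ^ (r + 1)).det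
  push_cast
  linear_combination det_identity_general (2 : ℝ) 2 1 n
end
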